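/- arXiv:0812.3084 — 2 statements merged into one kernel-verified Lean document; each statement's English description precedes it below -/
import Mathlib

section
/- If n > max(3^d, 2^{d+1} + 1) φ, then, with W := n − S the number of nonisolated points, there exists a coupling of W with a random variable W' having the W size-biased distribution such that |W' − W| ≤ κ_d + 1 almost surely and Var( E[W' − W | W] ) ≤ η_S(n,ρ)/n. -/
open MeasureTheory ProbabilityTheory Filter Set Metric
open scoped ENNReal NNReal BigOperators Topology Classical

noncomputable section

/-- Side length `n^(1/d)` of the cube `C_n` of volume `n` in dimension `d`. -/
def sideLen (d n : ℕ) : ℝ := (n : ℝ) ^ ((d : ℝ)⁻¹)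

/-- The cube `C_n = [0, L)^d`. -/
def box (d : ℕ) (L : ℝ) : Set (Fin d → ℝ) := Set.univ.pi fun _ => Set.Ico (0 : ℝ) L

/-- The Euclidean toroidal distance on the cube `[0, L)^d`. -/
def torDist {d : ℕ} (L : ℝ) (x y : Fin d → ℝ) : ℝ :=
  Real.sqrt (∑ i, (⨅ k : ℤ, |x i - y i - k * L|) ^ 2)

/-- The toroidal ball `B_r(x) = {y ∈ C_n : D(x,y) ≤ r}`. -/
def torBall {d : ℕ} (L : ℝ) (x : Fin d → ℝ) (r : ℝ) : Set (Fin d → ℝ) :=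
  {y ∈ box d L | torDist L x y ≤ r}

/-- Addition (translation) in the torus `[0, L)^d`. -/
def torAdd {d : ℕ} (L : ℝ) (y x : Fin d → ℝ) : Fin d → ℝ :=
  fun i => L * Int.fract ((y i + x i) / L)

/-- The uniform probability measure on the cube `[0, L)^d`. -/
def uniformBox (d : ℕ) (L : ℝ) : Measure (Fin d → ℝ) :=
  ((L.toNNReal ^ d)⁻¹ : ℝ≥0) • volume.restrict (box d L)

/-- The joint law of `n` independent points uniformly distributed on the cube `C_n`
of volume `n`; a point configuration is `ω : Fin n → (Fin d → ℝ)`, with `U_i = ω i`. -/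
def binppLaw (d n : ℕ) : Measure (Fin n → Fin d → ℝ) :=
  Measure.pi fun _ => uniformBox d (sideLen d n)

/-- The total covered volume `V` of the union of toroidal balls of radius `ρ`
centered at the `n` points. -/
def coveredVol (d n : ℕ) (ρ : ℝ) (ω : Fin n → Fin d → ℝ) : ℝ :=
  (volume (⋃ i, torBall (sideLen d n) (ω i) ρ)).toReal

/-- The number `S` of isolated points: indices `i` with `𝒰_n ∩ B_ρ(U_i) = {U_i}`. -/
def isolCount (d n : ℕ) (ρ : ℝ) (ω : Fin n → Fin d → ℝ) : ℝ :=
  ∑ i, if Set.range ω ∩ torBall (sideLen d n) (ω i) ρ = {ω i} then 1 else 0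

/-- `π_d`: the volume of the unit ball in `ℝ^d`. -/
def unitBallVol (d : ℕ) : ℝ :=
  (volume (Metric.closedBall (0 : EuclideanSpace ℝ (Fin d)) 1)).toReal

/-- `φ = π_d ρ^d`. -/
def phi (d : ℕ) (ρ : ℝ) : ℝ := unitBallVol d * ρ ^ d

/-- The standard normal cumulative distribution function. -/
def stdGaussCDF (t : ℝ) : ℝ := (gaussianReal 0 1 (Set.Iic t)).toReal

/-- The Kolmogorov distance `D_X` between the law of the standardized version of `X`
and the standard normal. -/
def kolDist {Ω : Type*} [MeasurableSpace Ω] (P : Measure Ω) (X : Ω → ℝ) : ℝ :=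
  ⨆ t : ℝ,
    |(P {ω | (X ω - ∫ x, X x ∂P) / Real.sqrt (variance X P) ≤ t}).toReal - stdGaussCDF t|

/-- A fixed unit vector in `ℝ^d` (junk value `0` if `d = 0`). -/
def unitVec (d : ℕ) : EuclideanSpace ℝ (Fin d) :=
  if h : 0 < d then EuclideanSpace.single (⟨0, h⟩ : Fin d) 1 else 0

/-- `ω_d(r)`: the volume of the union of two unit balls in `ℝ^d` whose centers are
at distance `r` apart. -/
def omegaVol (d : ℕ) (r : ℝ) : ℝ :=
  (volume (Metric.closedBall (0 : EuclideanSpace ℝ (Fin d)) 1 ∪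
      Metric.closedBall (r • unitVec d) 1)).toReal

/-- The integral `J_{r,d}(ρ) = d π_d ∫_0^r exp(-ρ^d ω_d(t)) t^{d-1} dt`. -/
def Jint (r : ℝ) (d : ℕ) (ρ : ℝ) : ℝ :=
  d * unitBallVol d * ∫ t in (0:ℝ)..r, Real.exp (-(ρ ^ d * omegaVol d t)) * t ^ (d - 1)

/-- The limiting variance density `g_V(ρ)`. -/
def gV (d : ℕ) (ρ : ℝ) : ℝ :=
  ρ ^ d * Jint 2 d ρ - (2 ^ d * phi d ρ + phi d ρ ^ 2) * Real.exp (-(2 * phi d ρ))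

/-- The limiting variance density `g_S(ρ)`. -/
def gS (d : ℕ) (ρ : ℝ) : ℝ :=
  Real.exp (-phi d ρ) - (1 + (2 ^ d - 2) * phi d ρ + phi d ρ ^ 2) * Real.exp (-(2 * phi d ρ))
    + ρ ^ d * (Jint 2 d ρ - Jint 1 d ρ)

/-- `κ_d`: the maximum number of closed unit balls in `ℝ^d` that can be packed so that
they all intersect a closed unit ball at the origin but are pairwise disjoint. -/
def kappa (d : ℕ) : ℕ :=
  sSup {k : ℕ | ∃ c : Fin k → EuclideanSpace ℝ (Fin d),
    (∀ i, (Metric.closedBall (c i) 1 ∩ Metric.closedBall 0 1).Nonempty) ∧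
    Pairwise fun i j => Disjoint (Metric.closedBall (c i) 1) (Metric.closedBall (c j) 1)}

/-- `η_V(n, ρ)`. -/
def etaV (d n : ℕ) (ρ : ℝ) : ℝ :=
  2 * phi d ρ ^ 2 * ((3 ^ d + 1) * phi d ρ + 1) ^ 2 *
      (1 + (2 ^ d + 1) * 6 ^ d * phi d ρ +
        ((2 * n - 6 ^ d * phi d ρ) / (n - 6 ^ d * phi d ρ)) * 6 ^ (2 * d) * phi d ρ ^ 2) +
    2 * phi d ρ ^ 4 *
      (3 * (4 ^ d + 2 ^ d) * phi d ρ +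
        3 * 4 ^ d * phi d ρ ^ 2 * ((2 * n - 3 * 2 ^ d * phi d ρ) / (n - 3 * 2 ^ d * phi d ρ)) +
        4 + 2 / n)

/-- `η_S(n, ρ)`. -/
def etaS (d n : ℕ) (ρ : ℝ) : ℝ :=
  2 * (1 + 2 * (kappa d : ℝ)) ^ 2 *
      (1 + (2 ^ d + 1) * 3 ^ d * phi d ρ +
        ((2 * n - 3 ^ d * phi d ρ) / (n - 3 ^ d * phi d ρ)) * 9 ^ d * phi d ρ ^ 2) +
    (((1 : ℝ) + kappa d) ^ 2 / 2) *
      ((2 ^ d + 2 * 3 ^ d + 3) * phi d ρ +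
        (2 ^ (d + 1) + 1) *
          ((2 * n - (2 ^ (d + 1) + 1) * phi d ρ) / (n - (2 ^ (d + 1) + 1) * phi d ρ)) *
          phi d ρ ^ 2 +
        (4 * n - 2) / (n - 1))



theorem intble_bdd {α : Type*} [MeasurableSpace α] (ν : Measure α) [IsFiniteMeasure ν]
    {f : α → ℝ} (hf : Measurable f) {C : ℝ} (hC : ∀ x, |f x| ≤ C) : Integrable f ν :=
  Integrable.of_bound hf.aestronglyMeasurable C (Eventually.of_forall fun x => by
    simpa [Real.norm_eq_abs] using hC x)

theorem upd_mp {E : Type*} [MeasurableSpace E] (μ : Measure E) [IsProbabilityMeasure μ]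
    {n : ℕ} (i : Fin n) :
    MeasurePreserving (fun q : (Fin n → E) × E => Function.update q.1 i q.2)
      ((Measure.pi fun _ => μ).prod μ) (Measure.pi fun _ => μ) := by
  have hm : Measurable (fun q : (Fin n → E) × E => Function.update q.1 i q.2) := by
    rw [measurable_pi_iff]
    intro a
    by_cases h : a = i
    · subst h; simpa using measurable_snd
    · simp only [Function.update_of_ne h]
      exact (measurable_pi_apply a).comp measurable_fst
  refine ⟨hm, ?_⟩
  symm
  apply Measure.pi_eq
  intro s hs
  rw [Measure.map_apply hm (MeasurableSet.univ_pi hs)]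
  have : (fun q : (Fin n → E) × E => Function.update q.1 i q.2) ⁻¹' (Set.univ.pi s)
      = (Set.univ.pi (Function.update s i Set.univ)) ×ˢ (s i) := by
    ext ⟨ω, x⟩
    simp only [mem_preimage, Set.mem_pi, mem_univ, forall_const, mem_prod]
    constructor
    · intro h
      refine ⟨fun a => ?_, by simpa using h i⟩
      by_cases ha : a = i
      · subst ha; simp
      · simpa [ha] using h a
    · rintro ⟨h1, h2⟩ a
      by_cases ha : a = i
      · subst ha; simpa using h2
      · simpa [ha] using h1 a
  rw [this, Measure.prod_prod, Measure.pi_pi]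
  rw [← Finset.mul_prod_erase Finset.univ _ (Finset.mem_univ i),
    ← Finset.mul_prod_erase Finset.univ (fun a => μ (s a)) (Finset.mem_univ i)]
  simp only [Function.update_self, measure_univ, one_mul]
  rw [mul_comm]
  congr 1
  apply Finset.prod_congr rfl
  intro a ha
  rw [Function.update_of_ne (Finset.ne_of_mem_erase ha)]

theorem integral_upd {E : Type*} [MeasurableSpace E] (μ : Measure E) [IsProbabilityMeasure μ]
    {n : ℕ} (i : Fin n) {f : (Fin n → E) → ℝ} (hf : Measurable f) {C : ℝ}
    (hC : ∀ x, |f x| ≤ C) :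
    ∫ ω, f ω ∂(Measure.pi fun _ => μ) =
      ∫ ω, ∫ x, f (Function.update ω i x) ∂μ ∂(Measure.pi fun _ => μ) := by
  have h := upd_mp μ i
  rw [← h.map_eq, integral_map h.measurable.aemeasurable hf.aestronglyMeasurable, h.map_eq]
  exact integral_prod (fun q : (Fin n → E) × E => f (Function.update q.1 i q.2))
    (intble_bdd _ (hf.comp h.measurable) (fun x => hC _))

theorem mean_sq_min {E : Type*} [MeasurableSpace E] (μ : Measure E) [IsProbabilityMeasure μ]
    {g : E → ℝ} (hg : Measurable g) {C : ℝ} (hC : ∀ x, |g x| ≤ C) (a : ℝ) :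
    ∫ x, g x ^ 2 ∂μ - (∫ x, g x ∂μ) ^ 2 ≤ ∫ x, (g x - a) ^ 2 ∂μ := by
  have i1 : Integrable g μ := intble_bdd μ hg hC
  have i2 : Integrable (fun x => g x ^ 2) μ := intble_bdd μ (hg.pow_const 2) (C := C ^ 2)
    (fun x => by rw [abs_pow]; exact pow_le_pow_left₀ (abs_nonneg _) (hC x) 2)
  have : ∫ x, (g x - a) ^ 2 ∂μ = ∫ x, g x ^ 2 ∂μ - 2 * a * ∫ x, g x ∂μ + a ^ 2 := by
    have : (fun x => (g x - a) ^ 2) = fun x => (g x ^ 2 - (2 * a) * g x) + a ^ 2 := by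
      ext x; ring
    have i3 : Integrable (fun x => g x ^ 2 - (2 * a) * g x) μ := i2.sub (i1.const_mul _)
    rw [this, integral_add i3 (integrable_const _),
      integral_sub i2 (i1.const_mul _), integral_const_mul]
    simp
  rw [this]
  nlinarith [sq_nonneg (∫ x, g x ∂μ - a)]

theorem abs_integral_le {E : Type*} [MeasurableSpace E] (μ : Measure E) [IsProbabilityMeasure μ]
    {g : E → ℝ} {C : ℝ} (hC : ∀ x, |g x| ≤ C) : |∫ x, g x ∂μ| ≤ C := by
  have := norm_integral_le_of_norm_le_const (μ := μ) (f := g) (C := C)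
    (Eventually.of_forall fun x => by simpa [Real.norm_eq_abs] using hC x)
  simpa [Real.norm_eq_abs] using this

theorem efron {E : Type*} [MeasurableSpace E] (μ : Measure E) [IsProbabilityMeasure μ] (γ : E) :
    ∀ (n : ℕ) (f : (Fin n → E) → ℝ), Measurable f → ∀ C : ℝ, (∀ ω, |f ω| ≤ C) →
    ∫ ω, f ω ^ 2 ∂(Measure.pi fun _ => μ) - (∫ ω, f ω ∂(Measure.pi fun _ => μ)) ^ 2 ≤
      ∑ k, ∫ ω, (f ω - f (Function.update ω k γ)) ^ 2 ∂(Measure.pi fun _ => μ) := by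
  intro n
  induction n with
  | zero =>
    intro f hf C hC
    have : f = fun _ => f default := by ext x; rw [Subsingleton.elim x default]
    rw [this]; simp
  | succ n ih =>
    intro f hf C hC
    set P := Measure.pi (fun _ : Fin n => μ) with hP
    let e : E × (Fin n → E) → (Fin (n+1) → E) := fun q => Fin.cons q.1 q.2
    have he : MeasurePreserving e (μ.prod P) (Measure.pi fun _ : Fin (n+1) => μ) := by
      have := (measurePreserving_piFinSuccAbove (fun _ : Fin (n+1) => μ) 0).symm
      convert this using 1
      ext q : 1
      simp [e, MeasurableEquiv.piFinSuccAbove, Fin.insertNthEquiv]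
    have key : ∀ g : (Fin (n+1) → E) → ℝ, Measurable g → ∀ D : ℝ, (∀ ω, |g ω| ≤ D) →
        ∫ ω, g ω ∂(Measure.pi fun _ => μ) = ∫ y, ∫ x, g (Fin.cons x y) ∂μ ∂P := by
      intro g hg D hD
      rw [← he.map_eq, integral_map he.measurable.aemeasurable hg.aestronglyMeasurable]
      exact integral_prod_symm (fun q : E × (Fin n → E) => g (Fin.cons q.1 q.2))
        (intble_bdd _ (hg.comp he.measurable) (fun x => hD _))
    have hmu : ∀ k : Fin (n+1), Measurable (fun ω : Fin (n+1) → E => Function.update ω k γ) :=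
      fun k => (upd_mp μ k).measurable.comp (measurable_id.prodMk measurable_const)
    have hmu' : ∀ k : Fin n, Measurable (fun ω : Fin n → E => Function.update ω k γ) :=
      fun k => (upd_mp μ k).measurable.comp (measurable_id.prodMk measurable_const)
    have hb2 : ∀ ω, |f ω ^ 2| ≤ C ^ 2 := fun x => by
      rw [abs_pow]; exact pow_le_pow_left₀ (abs_nonneg _) (hC x) 2
    have hsub : ∀ ω ω', |(f ω - f ω') ^ 2| ≤ (2 * C) ^ 2 := fun x y => by
      rw [abs_pow]; refine pow_le_pow_left₀ (abs_nonneg _) ?_ 2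
      have h1 := abs_le.1 (hC x); have h2 := abs_le.1 (hC y)
      exact abs_le.2 ⟨by linarith, by linarith⟩
    have hfe : Measurable (fun q : E × (Fin n → E) => f (Fin.cons q.1 q.2)) :=
      hf.comp he.measurable
    have hfx : ∀ y : Fin n → E, Measurable (fun x => f (Fin.cons x y)) := fun y =>
      hfe.comp (measurable_id.prodMk measurable_const)
    let fb : (Fin n → E) → ℝ := fun y => ∫ x, f (Fin.cons x y) ∂μ
    have hfb : Measurable fb :=
      (hfe.stronglyMeasurable.integral_prod_left' (μ := μ)).measurable
    have hfbC : ∀ y, |fb y| ≤ C := fun y => abs_integral_le μ (fun x => hC _)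
    rw [key _ (hf.pow_const 2) _ hb2, key f hf C hC, Fin.sum_univ_succ]
    have hI := ih fb hfb C hfbC
    have t0 : ∫ y, ∫ x, f (Fin.cons x y) ^ 2 ∂μ ∂P - ∫ y, fb y ^ 2 ∂P
        ≤ ∫ ω, (f ω - f (Function.update ω 0 γ)) ^ 2 ∂(Measure.pi fun _ => μ) := by
      rw [key (fun ω => (f ω - f (Function.update ω 0 γ)) ^ 2)
        ((hf.sub (hf.comp (hmu 0))).pow_const 2) _ (fun ω => hsub _ _)]
      have j1 : Integrable (fun y => ∫ x, f (Fin.cons x y) ^ 2 ∂μ) P :=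
        intble_bdd P ((hfe.pow_const 2).stronglyMeasurable.integral_prod_left' (μ := μ)).measurable
          (fun y => abs_integral_le μ (fun x => hb2 _))
      have j2 : Integrable (fun y => fb y ^ 2) P :=
        intble_bdd P (hfb.pow_const 2) (C := C ^ 2) (fun x => by
          rw [abs_pow]; exact pow_le_pow_left₀ (abs_nonneg _) (hfbC x) 2)
      rw [← integral_sub j1 j2]
      apply integral_mono (j1.sub j2)
      · refine intble_bdd P (Measurable.stronglyMeasurable (f := fun q : E × (Fin n → E) =>
          (f (Fin.cons q.1 q.2) - f (Function.update (Fin.cons q.1 q.2 : Fin (n+1) → E) 0 γ)) ^ 2) ?_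
          |>.integral_prod_left' (μ := μ)).measurable (fun y => abs_integral_le μ (fun x => hsub _ _))
        exact ((hf.sub (hf.comp (hmu 0))).pow_const 2).comp he.measurable
      · intro y
        have := mean_sq_min μ (hfx y) (fun x => hC _) (f (Fin.cons γ y))
        simpa [Fin.update_cons_zero] using this
    have t1 : ∀ k : Fin n, ∫ y, (fb y - fb (Function.update y k γ)) ^ 2 ∂P ≤
        ∫ ω, (f ω - f (Function.update ω k.succ γ)) ^ 2 ∂(Measure.pi fun _ => μ) := by
      intro k
      rw [key (fun ω => (f ω - f (Function.update ω k.succ γ)) ^ 2)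
        ((hf.sub (hf.comp (hmu k.succ))).pow_const 2) _ (fun ω => hsub _ _)]
      apply integral_mono
      · refine intble_bdd P ((hfb.sub (hfb.comp (hmu' k))).pow_const 2) (C := (2 * C) ^ 2) ?_
        intro y
        rw [abs_pow]; refine pow_le_pow_left₀ (abs_nonneg _) ?_ 2
        have h1 := abs_le.1 (hfbC y); have h2 := abs_le.1 (hfbC (Function.update y k γ))
        exact abs_le.2 ⟨by linarith, by linarith⟩
      · refine intble_bdd P (Measurable.stronglyMeasurable (f := fun q : E × (Fin n → E) =>
          (f (Fin.cons q.1 q.2) - f (Function.update (Fin.cons q.1 q.2 : Fin (n+1) → E) k.succ γ)) ^ 2) ?_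
          |>.integral_prod_left' (μ := μ)).measurable (fun y => abs_integral_le μ (fun x => hsub _ _))
        exact ((hf.sub (hf.comp (hmu k.succ))).pow_const 2).comp he.measurable
      · intro y
        simp only [← Fin.cons_update]
        have e1 : fb y - fb (Function.update y k γ) =
            ∫ x, (f (Fin.cons x y) - f (Fin.cons x (Function.update y k γ))) ∂μ := by
          rw [integral_sub (intble_bdd μ (hfx _) fun x => hC _)
            (intble_bdd μ (hfx _) fun x => hC _)]
        have := mean_sq_min μ (g := fun x =>
            (f (Fin.cons x y) - f (Fin.cons x (Function.update y k γ))))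
          ((hfx y).sub (hfx _)) (C := 2 * C) (fun x => by
            have h1 := abs_le.1 (hC (Fin.cons x y))
            have h2 := abs_le.1 (hC (Fin.cons x (Function.update y k γ)))
            exact abs_le.2 ⟨by linarith, by linarith⟩) 0
        have h0 := variance_nonneg (fun x =>
            (f (Fin.cons x y) - f (Fin.cons x (Function.update y k γ)))) μ
        rw [variance_eq_sub] at h0
        · rw [e1]
          simp only [Pi.pow_apply] at h0
          linarith
        · refine MemLp.of_bound ((hfx y).sub (hfx _)).aestronglyMeasurable (2 * C) ?_
          refine Eventually.of_forall fun x => ?_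
          have h1 := abs_le.1 (hC (Fin.cons x y))
          have h2 := abs_le.1 (hC (Fin.cons x (Function.update y k γ)))
          rw [Real.norm_eq_abs]
          exact abs_le.2 ⟨by linarith, by linarith⟩
    have := Finset.sum_le_sum (fun k (_ : k ∈ Finset.univ) => t1 k)
    linarith


/-- Abstract data for the coupling argument. -/
structure Geo (E : Type) [MeasurableSpace E] where
  μ : Measure E
  prob : IsProbabilityMeasure μ
  adj : E → E → Prop
  adj2 : E → E → Prop
  adj3 : E → E → Prop
  symm : ∀ x y, adj x y → adj y x
  m1 : MeasurableSet {q : E × E | adj q.1 q.2}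
  m2 : MeasurableSet {q : E × E | adj2 q.1 q.2}
  m3 : MeasurableSet {q : E × E | adj3 q.1 q.2}
  a12 : ∀ x y, adj x y → adj2 x y
  a13 : ∀ x y, adj x y → adj3 x y
  a112 : ∀ x y z, adj x y → adj y z → adj2 x z
  a123 : ∀ x y z, adj x y → adj2 y z → adj3 x z
  γ : E
  hγ : ∀ x, ¬ adj γ x
  p : ℝ
  p0 : 0 < p
  p1 : p < 1
  hp : ∀ x, μ.real {z | adj x z} ≤ p
  hpe : ∀ᵐ x ∂μ, μ.real {z | adj x z} = p
  p2 : ℝ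
  p3 : ℝ
  hp2 : ∀ y, μ.real {x | adj2 x y} ≤ p2
  hp3 : ∀ y, μ.real {x | adj3 x y} ≤ p3
  K : ℕ
  pack : ∀ (n : ℕ) (ω : Fin n → E) (z : E) (s : Finset (Fin n)), (∀ l ∈ s, adj z (ω l)) →
    (∀ l ∈ s, ∀ l' ∈ s, l ≠ l' → ¬ adj (ω l) (ω l')) → s.card ≤ K

namespace Geo
variable {E : Type} [MeasurableSpace E] (G : Geo E) {n : ℕ}

instance : IsProbabilityMeasure G.μ := G.prob

/-- law of n iid points -/
def P (n : ℕ) : Measure (Fin n → E) := Measure.pi fun _ => G.μ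

instance : IsProbabilityMeasure (G.P n) := by unfold P; infer_instance

/-- number of neighbours -/
def nb (ω : Fin n → E) (i : Fin n) : ℕ :=
  ∑ j, if j ≠ i ∧ G.adj (ω i) (ω j) then 1 else 0

/-- number of nonisolated points -/
def W (ω : Fin n → E) : ℝ :=
  ∑ i, if ∃ j, j ≠ i ∧ G.adj (ω i) (ω j) then 1 else 0

/-- `l` is isolated once `j` is removed -/
def iso (ω : Fin n → E) (j l : Fin n) : Prop :=
  ∀ l', l' ≠ l → l' ≠ j → ¬ G.adj (ω l) (ω l')

/-- nonisolated count without j -/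
def V (ω : Fin n → E) (j : Fin n) : ℝ :=
  ∑ l ∈ Finset.univ.erase j, if G.iso ω j l then 0 else 1

/-- add-one cost -/
def Dl (ω : Fin n → E) (j : Fin n) (z : E) : ℝ :=
  (∑ l ∈ Finset.univ.erase j, if G.adj z (ω l) ∧ G.iso ω j l then 1 else 0) +
    if ∃ l, l ≠ j ∧ G.adj z (ω l) then 1 else 0

theorem W_upd (ω : Fin n → E) (j : Fin n) (z : E) :
    G.W (Function.update ω j z) = G.V ω j + G.Dl ω j z := by
  unfold W V Dl
  rw [← Finset.add_sum_erase _ _ (Finset.mem_univ j), ← add_assoc, ← Finset.sum_add_distrib,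
    add_comm]
  congr 1
  · apply Finset.sum_congr rfl
    intro l hl
    have hlj : l ≠ j := Finset.ne_of_mem_erase hl
    have : (∃ j', j' ≠ l ∧ G.adj (Function.update ω j z l) (Function.update ω j z j')) ↔
        (¬ G.iso ω j l ∨ G.adj z (ω l)) := by
      unfold iso
      rw [Function.update_of_ne hlj]
      push Not
      constructor
      · rintro ⟨j', h1, h2⟩
        by_cases h : j' = j
        · subst h; right; rw [Function.update_self] at h2; exact G.symm _ _ h2
        · left; rw [Function.update_of_ne h] at h2; exact ⟨j', h1, h, h2⟩
      · rintro (⟨j', h1, h, h2⟩ | h)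
        · exact ⟨j', h1, by rwa [Function.update_of_ne h]⟩
        · exact ⟨j, hlj.symm, by rw [Function.update_self]; exact G.symm _ _ h⟩
    simp only [this]
    by_cases h1 : G.iso ω j l <;> by_cases h2 : G.adj z (ω l) <;> simp [h1, h2]
  · have : (∃ j', j' ≠ j ∧ G.adj (Function.update ω j z j) (Function.update ω j z j')) ↔
        (∃ l, l ≠ j ∧ G.adj z (ω l)) := by
      constructor
      · rintro ⟨j', h1, h2⟩
        rw [Function.update_self, Function.update_of_ne h1] at h2
        exact ⟨j', h1, h2⟩
      · rintro ⟨j', h1, h2⟩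
        exact ⟨j', h1, by rwa [Function.update_self, Function.update_of_ne h1]⟩
    simp only [this]

theorem W_eq (ω : Fin n → E) (j : Fin n) : G.W ω = G.V ω j + G.Dl ω j (ω j) := by
  rw [← W_upd, Function.update_eq_self]

theorem iso_upd (ω : Fin n → E) (j l : Fin n) (h : l ≠ j) (x : E) :
    G.iso (Function.update ω j x) j l ↔ G.iso ω j l := by
  unfold iso
  refine forall_congr' fun l' => forall_congr' fun h1 => forall_congr' fun h2 => ?_
  rw [Function.update_of_ne h, Function.update_of_ne h2]

theorem Dl_upd (ω : Fin n → E) (j : Fin n) (x z : E) :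
    G.Dl (Function.update ω j x) j z = G.Dl ω j z := by
  unfold Dl
  congr 1
  · apply Finset.sum_congr rfl
    intro l hl
    have hlj : l ≠ j := Finset.ne_of_mem_erase hl
    rw [G.iso_upd ω j l hlj, Function.update_of_ne hlj]
  · have : (∃ l, l ≠ j ∧ G.adj z (Function.update ω j x l)) ↔ (∃ l, l ≠ j ∧ G.adj z (ω l)) := by
      refine exists_congr fun l => and_congr_right fun h => ?_
      rw [Function.update_of_ne h]
    simp only [this]

theorem Dl_nonneg (ω : Fin n → E) (j : Fin n) (z : E) : 0 ≤ G.Dl ω j z := by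
  unfold Dl
  apply add_nonneg
  · exact Finset.sum_nonneg fun l _ => by split_ifs <;> norm_num
  · split_ifs <;> norm_num

theorem Dl_le (ω : Fin n → E) (j : Fin n) (z : E) : G.Dl ω j z ≤ G.K + 1 := by
  unfold Dl
  apply add_le_add
  · rw [Finset.sum_boole]
    have := G.pack n ω z (Finset.filter (fun l => G.adj z (ω l) ∧ G.iso ω j l)
      (Finset.univ.erase j)) (fun l hl => (Finset.mem_filter.1 hl).2.1) (by
        intro l hl l' hl' hne
        exact (Finset.mem_filter.1 hl).2.2 l' hne.symm
          (Finset.ne_of_mem_erase (Finset.mem_filter.1 hl').1))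
    exact_mod_cast this
  · split_ifs <;> norm_num

theorem one_le_Dl (ω : Fin n → E) (i j : Fin n) (h : i ≠ j) (z : E) (hz : G.adj (ω i) z) :
    1 ≤ G.Dl ω j z := by
  unfold Dl
  rw [if_pos (c := ∃ l, l ≠ j ∧ G.adj z (ω l)) ⟨i, h, G.symm _ _ hz⟩]
  have : 0 ≤ ∑ l ∈ Finset.univ.erase j, if G.adj z (ω l) ∧ G.iso ω j l then (1:ℝ) else 0 :=
    Finset.sum_nonneg fun l _ => by split_ifs <;> norm_num
  linarith

theorem Dl_γ (ω : Fin n → E) (j : Fin n) : G.Dl ω j G.γ = 0 := by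
  unfold Dl; simp [G.hγ]

theorem hγ' (x : E) : ¬ G.adj x G.γ := fun h => G.hγ x (G.symm _ _ h)

/-- locality -/
theorem Dl_loc (ω : Fin n → E) (j k : Fin n) (hk : k ≠ j) (z : E) (hz : ¬ G.adj2 z (ω k)) :
    G.Dl (Function.update ω k G.γ) j z = G.Dl ω j z := by
  have hzk : ¬ G.adj z (ω k) := fun h => hz (G.a12 _ _ h)
  have hadj : ∀ l, G.adj z (Function.update ω k G.γ l) ↔ G.adj z (ω l) := by
    intro l
    by_cases h : l = k
    · subst h; simp [hzk, G.hγ']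
    · rw [Function.update_of_ne h]
  unfold Dl
  simp only [hadj]
  congr 1
  apply Finset.sum_congr rfl
  intro l hl
  have : (G.adj z (ω l) ∧ G.iso (Function.update ω k G.γ) j l) ↔
      (G.adj z (ω l) ∧ G.iso ω j l) := by
    refine and_congr_right fun h => ?_
    have hlk : l ≠ k := by rintro rfl; exact hzk h
    unfold iso
    rw [Function.update_of_ne hlk]
    refine forall_congr' fun l' => forall_congr' fun h1 => forall_congr' fun h2 => ?_
    by_cases h' : l' = k
    · subst h'
      rw [Function.update_self]
      simp only [G.hγ', not_false_eq_true, true_iff]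
      exact fun h3 => hz (G.a112 _ _ _ h h3)
    · rw [Function.update_of_ne h']
  simp only [this]

theorem nb_loc (ω : Fin n → E) (i k : Fin n) (hk : i ≠ k) (hz : ¬ G.adj (ω i) (ω k)) :
    G.nb (Function.update ω k G.γ) i = G.nb ω i := by
  unfold nb
  apply Finset.sum_congr rfl
  intro l _
  rw [Function.update_of_ne hk]
  by_cases h : l = k
  · subst h; simp [hz, G.hγ']
  · rw [Function.update_of_ne h]

theorem nb_upd (ω : Fin n → E) (i j : Fin n) (hij : j ≠ i) (x : E) (hj : G.adj (ω i) (ω j)) :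
    G.nb (Function.update ω j x) i = if G.adj (ω i) x then G.nb ω i else G.nb ω i - 1 := by
  unfold nb
  rw [← Finset.add_sum_erase _ _ (Finset.mem_univ j),
    ← Finset.add_sum_erase (Finset.univ) (fun j => if j ≠ i ∧ G.adj (ω i) (ω j) then 1 else 0)
      (Finset.mem_univ j)]
  rw [Finset.sum_congr rfl (g := fun j => if j ≠ i ∧ G.adj (ω i) (ω j) then 1 else 0)]
  · rw [Function.update_of_ne hij.symm, Function.update_self]
    by_cases h : G.adj (ω i) x <;> simp [h, hij, hj]
  · intro l hl
    rw [Function.update_of_ne hij.symm, Function.update_of_ne (Finset.ne_of_mem_erase hl)]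

theorem nb_le (ω : Fin n → E) (i : Fin n) : G.nb ω i ≤ n - 1 := by
  unfold nb
  rw [← Finset.add_sum_erase _ _ (Finset.mem_univ i)]
  simp only [ne_eq, not_true_eq_false, false_and, if_false, zero_add]
  refine (Finset.sum_le_card_nsmul _ _ 1 ?_).trans ?_
  · intro l _; split_ifs <;> norm_num
  · simp

theorem nb_pos_iff (ω : Fin n → E) (i : Fin n) :
    1 ≤ G.nb ω i ↔ ∃ j, j ≠ i ∧ G.adj (ω i) (ω j) := by
  unfold nb
  rw [Nat.one_le_iff_ne_zero, ne_eq, Finset.sum_eq_zero_iff]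
  push Not
  constructor
  · rintro ⟨j, _, h⟩
    by_cases hh : j ≠ i ∧ G.adj (ω i) (ω j)
    · exact ⟨j, hh⟩
    · simp [hh] at h
  · rintro ⟨j, h⟩
    exact ⟨j, Finset.mem_univ _, by simp [h]⟩

/-! the sequence -/

theorem exists_pi (m : ℕ) (hm : 1 ≤ m) (r : ℝ) (hr : 0 < r) :
    ∃ (q : ℕ → ℝ) (c : ℝ), (∀ k, 0 ≤ q k ∧ q k ≤ 1) ∧
      ∀ k, k ≤ m → 1 - q k + (k / m : ℝ) * q k + (k / m : ℝ) * r * q (k - 1) =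
        (1 + c) * (if 1 ≤ k then 1 else 0) := by
  let v : ℕ → ℝ := fun l => Nat.rec (motive := fun _ => ℝ) 0
    (fun l vl => 1 + (l : ℝ) / ((m - l + 1) * r) * vl) l
  have v0 : v 0 = 0 := rfl
  have vs : ∀ l, v (l+1) = 1 + (l : ℝ) / ((m - l + 1) * r) * v l := fun l => rfl
  have hnn : ∀ l, l ≤ m → 0 ≤ v l := by
    intro l
    induction l with
    | zero => intro _; simp [v0]
    | succ l ih =>
      intro h
      have : (l : ℝ) + 1 ≤ m := by exact_mod_cast h
      rw [vs]
      have h2 := ih (by omega)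
      have : (0:ℝ) < (m - l + 1) * r := by apply mul_pos _ hr; linarith
      positivity
  have hmono : ∀ l, l + 1 ≤ m → v l ≤ v (l+1) := by
    intro l
    induction l with
    | zero => intro h; rw [v0]; exact hnn 1 h
    | succ l ih =>
      intro h
      have h1 : (l : ℝ) + 2 ≤ m := by exact_mod_cast h
      have h2 := ih (by omega)
      rw [vs, vs (l+1)]
      have h3 := hnn l (by omega)
      have h4 := hnn (l+1) (by omega)
      push_cast
      have p1 : (0:ℝ) < (m - (l + 1) + 1) * r := by apply mul_pos _ hr; linarith
      have : (l : ℝ) / ((m - l + 1) * r) ≤ ((l : ℝ) + 1) / ((m - (l+1) + 1) * r) := by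
        apply div_le_div₀ (by positivity) (by linarith) p1
        apply mul_le_mul_of_nonneg_right _ hr.le; linarith
      have h6 := mul_le_mul this h2 h3 (div_nonneg (by positivity) p1.le)
      linarith
  have hmono2 : ∀ l l', l ≤ l' → l' ≤ m → v l ≤ v l' := by
    intro l l' h
    induction h with
    | refl => intro _; rfl
    | step h ih => intro h2; exact (ih (by omega)).trans (hmono _ h2)
  have v1 : v 1 = 1 := by have := vs 0; rw [v0] at this; simpa using this
  have hpos : 0 < v m := by
    have := hmono2 1 m hm le_rfl
    rw [v1] at this; linarith
  have hm0 : (0:ℝ) < m := by exact_mod_cast hm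
  refine ⟨fun k => v (m - k) / ((k + 1) * v m), r / (m * v m), ?_, ?_⟩
  · intro k
    have h1 := hnn (m - k) (by omega)
    refine ⟨by positivity, ?_⟩
    rw [div_le_one (by positivity)]
    have h2 := hmono2 (m - k) m (by omega) le_rfl
    nlinarith [mul_nonneg (Nat.cast_nonneg (α := ℝ) k) hpos.le]
  · intro k hk
    rcases k with _ | k
    · simp; field_simp; simp
    · have e1 : m - (k + 1 - 1) = (m - (k+1)) + 1 := by omega
      have e2 : ((m - (k+1) : ℕ) : ℝ) = m - (k + 1) := by push_cast [Nat.cast_sub hk]; ring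
      simp only [e1, vs, e2]
      simp only [Nat.add_sub_cancel, Nat.le_add_left, if_true]
      push_cast
      have e3 : (m : ℝ) - (m - (k+1)) + 1 = k + 2 := by ring
      rw [e3]
      field_simp
      ring
end Geo

namespace Geo
variable {E : Type} [MeasurableSpace E] (G : Geo E) {n : ℕ}

theorem ms_adj {α : Type*} [MeasurableSpace α] {f g : α → E} (hf : Measurable f)
    (hg : Measurable g) : MeasurableSet {a | G.adj (f a) (g a)} := (hf.prodMk hg) G.m1

theorem meas_nb (i : Fin n) : Measurable (fun ω : Fin n → E => G.nb ω i) := by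
  unfold nb
  refine Finset.measurable_sum _ fun j _ => Measurable.ite ?_ measurable_const measurable_const
  exact (MeasurableSet.const _).inter (G.ms_adj (measurable_pi_apply i) (measurable_pi_apply j))

theorem meas_W : Measurable (fun ω : Fin n → E => G.W ω) := by
  unfold W
  refine Finset.measurable_sum _ fun i _ => Measurable.ite ?_ measurable_const measurable_const
  rw [ofPred_exists]
  refine MeasurableSet.iUnion fun j => ?_
  exact (MeasurableSet.const _).inter (G.ms_adj (measurable_pi_apply i) (measurable_pi_apply j))

theorem ms_iso (j l : Fin n) : MeasurableSet {ω : Fin n → E | G.iso ω j l} := by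
  unfold iso
  simp only [ofPred_forall]
  refine MeasurableSet.iInter fun l' => MeasurableSet.iInter fun _ => MeasurableSet.iInter fun _ => ?_
  exact (G.ms_adj (measurable_pi_apply l) (measurable_pi_apply l')).compl

theorem meas_Dl (j : Fin n) : Measurable (fun q : (Fin n → E) × E => G.Dl q.1 j q.2) := by
  unfold Dl
  refine Measurable.add ?_ ?_
  · refine Finset.measurable_sum _ fun l _ => Measurable.ite ?_ measurable_const measurable_const
    exact (G.ms_adj measurable_snd ((measurable_pi_apply l).comp measurable_fst)).inter
      (measurable_fst (G.ms_iso j l))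
  · refine Measurable.ite ?_ measurable_const measurable_const
    rw [ofPred_exists]
    refine MeasurableSet.iUnion fun l => ?_
    exact (MeasurableSet.const _).inter
      (G.ms_adj measurable_snd ((measurable_pi_apply l).comp measurable_fst))

theorem abs_W_le (ω : Fin n → E) : |G.W ω| ≤ n := by
  unfold W
  rw [Finset.sum_boole, abs_of_nonneg (by positivity)]
  exact_mod_cast (Finset.card_filter_le _ _).trans (by simp)

theorem abs_Dl_le (ω : Fin n → E) (j : Fin n) (z : E) : |G.Dl ω j z| ≤ G.K + 1 :=
  abs_le.2 ⟨by have := G.Dl_nonneg ω j z; have : (0:ℝ) ≤ G.K := by positivity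
               linarith, G.Dl_le ω j z⟩

/-- move weight -/
def w (x z : E) : ℝ := if G.adj x z then G.p⁻¹ else 0

theorem meas_w : Measurable (fun q : E × E => G.w q.1 q.2) :=
  Measurable.ite G.m1 measurable_const measurable_const

theorem w_nonneg (x z : E) : 0 ≤ G.w x z := by
  unfold w; have := G.p0; split_ifs <;> positivity

theorem w_le (x z : E) : G.w x z ≤ G.p⁻¹ := by
  unfold w; have := G.p0; split_ifs; rfl; positivity

theorem abs_w (x z : E) : |G.w x z| ≤ G.p⁻¹ := by
  rw [abs_of_nonneg (G.w_nonneg x z)]; exact G.w_le x z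

theorem int_w (x : E) : ∫ z, G.w x z ∂G.μ = G.p⁻¹ * G.μ.real {z | G.adj x z} := by
  have : (fun z => G.w x z) = {z | G.adj x z}.indicator (fun _ => G.p⁻¹) := by
    ext z; simp [w, indicator]
  have hs : MeasurableSet {z | G.adj x z} := G.ms_adj measurable_const measurable_id
  rw [this, integral_indicator hs]
  simp [mul_comm]

theorem int_w_le (x : E) : ∫ z, G.w x z ∂G.μ ≤ 1 := by
  rw [int_w]
  have := G.hp x; have h0 := G.p0
  rw [inv_mul_le_iff₀ h0]; linarith

theorem int_w_ae : ∀ᵐ x ∂G.μ, ∫ z, G.w x z ∂G.μ = 1 := by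
  filter_upwards [G.hpe] with x hx
  rw [int_w, hx, inv_mul_cancel₀ G.p0.ne']

theorem meas_w' (x : E) : Measurable (G.w x) :=
  G.meas_w.comp (measurable_const.prodMk measurable_id)

theorem intble_w (x : E) : Integrable (G.w x) G.μ := intble_bdd _ (G.meas_w' x) (G.abs_w x)

theorem intble_wg (x : E) {g : E → ℝ} (hg : Measurable g) {C : ℝ} (hC : ∀ z, |g z| ≤ C) :
    Integrable (fun z => G.w x z * g z) G.μ := by
  refine intble_bdd _ ((G.meas_w' x).mul hg) (C := G.p⁻¹ * C) fun z => ?_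
  rw [abs_mul]
  exact mul_le_mul (G.abs_w x z) (hC z) (abs_nonneg _) (by have := G.p0; positivity)

theorem wint (x : E) {g : E → ℝ} (hg : Measurable g) {C : ℝ} (hC : ∀ z, |g z| ≤ C)
    {a b : ℝ} (ha : a ≤ 0) (hb : 0 ≤ b) (h : ∀ z, G.adj x z → a ≤ g z ∧ g z ≤ b) :
    a ≤ ∫ z, G.w x z * g z ∂G.μ ∧ ∫ z, G.w x z * g z ∂G.μ ≤ b := by
  have hi := G.intble_wg x hg hC
  have h1 := G.int_w_le x
  have key : ∀ z, G.w x z * a ≤ G.w x z * g z ∧ G.w x z * g z ≤ G.w x z * b := by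
    intro z
    by_cases hz : G.adj x z
    · exact ⟨mul_le_mul_of_nonneg_left (h z hz).1 (G.w_nonneg x z),
        mul_le_mul_of_nonneg_left (h z hz).2 (G.w_nonneg x z)⟩
    · simp [w, hz]
  have k1 := integral_mono ((G.intble_w x).mul_const a) hi (fun z => (key z).1)
  have k2 := integral_mono hi ((G.intble_w x).mul_const b) (fun z => (key z).2)
  rw [integral_mul_const] at k1 k2
  constructor
  · nlinarith
  · nlinarith

/-- conditional expected change for pair i j -/
def H (q : ℕ → ℝ) (ω : Fin n → E) (i j : Fin n) : ℝ :=
  q (G.nb ω i) * ∫ z, G.w (ω i) z * (G.Dl ω j z - G.Dl ω j (ω j)) ∂G.μ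

/-- conditional expected change -/
def F (q : ℕ → ℝ) (ω : Fin n → E) : ℝ :=
  ((n : ℝ) * (n - 1))⁻¹ * ∑ i, ∑ j ∈ Finset.univ.erase i, G.H q ω i j

theorem meas_Dlω (ω : Fin n → E) (j : Fin n) : Measurable (fun z => G.Dl ω j z) :=
  (G.meas_Dl j).comp (measurable_const.prodMk measurable_id)

theorem meas_Dlj (j : Fin n) : Measurable (fun ω : Fin n → E => G.Dl ω j (ω j)) :=
  (G.meas_Dl j).comp (measurable_id.prodMk (measurable_pi_apply j))

theorem abs_dd (ω : Fin n → E) (j : Fin n) (z z' : E) :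
    |G.Dl ω j z - G.Dl ω j z'| ≤ G.K + 1 := by
  have h1 := G.Dl_nonneg ω j z; have h2 := G.Dl_nonneg ω j z'
  have h3 := G.Dl_le ω j z; have h4 := G.Dl_le ω j z'
  exact abs_le.2 ⟨by linarith, by linarith⟩

theorem meas_H {q : ℕ → ℝ} (i j : Fin n) :
    Measurable (fun ω : Fin n → E => G.H q ω i j) := by
  unfold H
  refine ((measurable_of_countable q).comp (G.meas_nb i)).mul ?_
  refine (Measurable.stronglyMeasurable (f := fun p : (Fin n → E) × E =>
    G.w (p.1 i) p.2 * (G.Dl p.1 j p.2 - G.Dl p.1 j (p.1 j))) ?_).integral_prod_right'.measurable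
  have h1 : Measurable (fun p : (Fin n → E) × E => (p.1 i, p.2)) :=
    ((measurable_pi_apply i).comp measurable_fst).prodMk measurable_snd
  refine (G.meas_w.comp h1).mul ?_
  exact (G.meas_Dl j).sub ((G.meas_Dlj j).comp measurable_fst)

theorem meas_F {q : ℕ → ℝ} : Measurable (fun ω : Fin n → E => G.F q ω) := by
  unfold F
  exact (Finset.measurable_sum _ fun i _ => Finset.measurable_sum _ fun j _ =>
    G.meas_H i j).const_mul _

theorem q_mul {t a b s : ℝ} (h0 : 0 ≤ t) (h1 : t ≤ 1) (ha : a ≤ 0) (hb : 0 ≤ b) (h : a ≤ s ∧ s ≤ b) :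
    a ≤ t * s ∧ t * s ≤ b := by
  constructor
  · rcases le_total 0 s with hs | hs <;> nlinarith
  · rcases le_total 0 s with hs | hs <;> nlinarith

theorem H_bd {q : ℕ → ℝ} (hq : ∀ k, 0 ≤ q k ∧ q k ≤ 1) (ω : Fin n → E) (i j : Fin n)
    (hij : i ≠ j) : -(G.K : ℝ) ≤ G.H q ω i j ∧ G.H q ω i j ≤ G.K + 1 := by
  unfold H
  have hK : (0:ℝ) ≤ G.K := by positivity
  refine q_mul (hq _).1 (hq _).2 (by linarith) (by linarith) ?_
  refine G.wint (ω i) ((G.meas_Dlω ω j).sub measurable_const) (fun z => G.abs_dd ω j z _)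
    (by linarith) (by linarith) (fun z hz => ?_)
  have h1 := G.one_le_Dl ω i j hij z hz; have h2 := G.Dl_nonneg ω j (ω j)
  have h3 := G.Dl_le ω j z; have h4 := G.Dl_le ω j (ω j)
  exact ⟨by simp only [Pi.sub_apply]; linarith, by simp only [Pi.sub_apply]; linarith⟩

/-- row weights -/
def cA (ω : Fin n → E) (k i : Fin n) : ℝ :=
  if i = k then G.K + 1 else if G.adj3 (ω i) (ω k) then 2 * (G.K : ℝ) + 1 else 0
/-- column weights -/
def cB (ω : Fin n → E) (k j : Fin n) : ℝ :=
  if j = k then G.K + 1 else if G.adj2 (ω j) (ω k) then (G.K : ℝ) + 1 else 0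

theorem dH {q : ℕ → ℝ} (hq : ∀ k, 0 ≤ q k ∧ q k ≤ 1) (ω : Fin n → E) (i j k : Fin n)
    (hij : i ≠ j) :
    |G.H q ω i j - G.H q (Function.update ω k G.γ) i j| ≤ G.cA ω k i + G.cB ω k j := by
  have hK : (0:ℝ) ≤ G.K := by positivity
  have hcB : 0 ≤ G.cB ω k j := by unfold cB; split_ifs <;> linarith
  by_cases hik : i = k
  · subst hik
    have : G.H q (Function.update ω i G.γ) i j = 0 := by
      unfold H; simp [w, G.hγ]
    rw [this, sub_zero]
    have h := G.H_bd hq ω i j hij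
    have : G.cA ω i i = G.K + 1 := by simp [cA]
    rw [this]
    exact abs_le.2 ⟨by linarith, by linarith⟩
  have hA : G.cA ω k i = if G.adj3 (ω i) (ω k) then 2 * (G.K : ℝ) + 1 else 0 := by simp [cA, hik]
  have hωi : Function.update ω k G.γ i = ω i := Function.update_of_ne hik _ _
  by_cases h3 : G.adj3 (ω i) (ω k)
  · rw [hA, if_pos h3]
    have h := G.H_bd hq ω i j hij
    have h' := G.H_bd hq (Function.update ω k G.γ) i j hij
    exact abs_le.2 ⟨by linarith, by linarith⟩
  · rw [hA, if_neg h3, zero_add]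
    have h1 : ¬ G.adj (ω i) (ω k) := fun h => h3 (G.a13 _ _ h)
    unfold H
    rw [G.nb_loc ω i k hik h1, hωi, ← mul_sub]
    rw [← integral_sub (G.intble_wg (ω i) (g := fun z => G.Dl ω j z - G.Dl ω j (ω j))
      ((G.meas_Dlω ω j).sub measurable_const)
      (fun z => G.abs_dd ω j z _)) (G.intble_wg (ω i)
      (g := fun z => G.Dl (Function.update ω k G.γ) j z -
        G.Dl (Function.update ω k G.γ) j (Function.update ω k G.γ j))
      ((G.meas_Dlω _ j).sub measurable_const)
      (fun z => G.abs_dd _ j z _))]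
    have key : ∃ D : ℝ, |D| ≤ G.cB ω k j ∧ ∀ z, G.adj (ω i) z →
        (G.Dl ω j z - G.Dl ω j (ω j)) - (G.Dl (Function.update ω k G.γ) j z -
          G.Dl (Function.update ω k G.γ) j (Function.update ω k G.γ j)) = D := by
      by_cases hjk : j = k
      · subst hjk
        refine ⟨- G.Dl ω j (ω j), ?_, fun z hz => ?_⟩
        · rw [abs_neg]
          have : G.cB ω j j = G.K + 1 := by simp [cB]
          rw [this]; exact G.abs_Dl_le ω j _
        · rw [G.Dl_upd, G.Dl_upd, Function.update_self, G.Dl_γ]; ring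
      · have hB : G.cB ω k j = if G.adj2 (ω j) (ω k) then (G.K : ℝ) + 1 else 0 := by simp [cB, hjk]
        have hz2 : ∀ z, G.adj (ω i) z → ¬ G.adj2 z (ω k) := fun z hz h => h3 (G.a123 _ _ _ hz h)
        rw [Function.update_of_ne hjk]
        refine ⟨G.Dl (Function.update ω k G.γ) j (ω j) - G.Dl ω j (ω j), ?_, fun z hz => ?_⟩
        · rw [hB]
          split_ifs with h2
          · have h1 := G.Dl_nonneg ω j (ω j); have h2 := G.Dl_nonneg (Function.update ω k G.γ) j (ω j)
            have h3 := G.Dl_le ω j (ω j); have h4 := G.Dl_le (Function.update ω k G.γ) j (ω j)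
            exact abs_le.2 ⟨by linarith, by linarith⟩
          · rw [G.Dl_loc ω j k (Ne.symm hjk) _ h2]; simp
        · rw [G.Dl_loc ω j k (Ne.symm hjk) z (hz2 z hz)]; ring
    obtain ⟨D, hD, hz⟩ := key
    have hD' := abs_le.1 hD
    have := G.wint (ω i) (g := fun z => (G.Dl ω j z - G.Dl ω j (ω j)) -
          (G.Dl (Function.update ω k G.γ) j z -
          G.Dl (Function.update ω k G.γ) j (Function.update ω k G.γ j)))
      (((G.meas_Dlω ω j).sub measurable_const).sub ((G.meas_Dlω _ j).sub measurable_const))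
      (C := (G.K + 1) + (G.K + 1)) (fun z => (abs_sub _ _).trans
        (add_le_add (G.abs_dd ω j z _) (G.abs_dd _ j z _)))
      (a := - G.cB ω k j) (b := G.cB ω k j) (by linarith) hcB
      (fun z h => by rw [hz z h]; exact hD')
    simp only [← mul_sub]
    exact abs_le.2 (q_mul (hq _).1 (hq _).2 (by linarith) hcB this)

theorem dF {q : ℕ → ℝ} (hq : ∀ k, 0 ≤ q k ∧ q k ≤ 1) (hn : 2 ≤ n) (ω : Fin n → E) (k : Fin n) :
    |G.F q ω - G.F q (Function.update ω k G.γ)| ≤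
      (n : ℝ)⁻¹ * ∑ i, (G.cA ω k i + G.cB ω k i) := by
  unfold F
  have hn' : (2:ℝ) ≤ n := by exact_mod_cast hn
  have h0 : (0:ℝ) < (n:ℝ) * (n-1) := by apply mul_pos <;> linarith
  rw [← mul_sub, abs_mul, abs_of_pos (inv_pos.2 h0)]
  have : |∑ i, ∑ j ∈ Finset.univ.erase i, G.H q ω i j -
      ∑ i, ∑ j ∈ Finset.univ.erase i, G.H q (Function.update ω k G.γ) i j| ≤
      (n - 1) * ∑ i, (G.cA ω k i + G.cB ω k i) := by
    simp only [← Finset.sum_sub_distrib]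
    refine (Finset.abs_sum_le_sum_abs _ _).trans ?_
    have : ∑ i, ∑ j ∈ Finset.univ.erase i, (G.cA ω k i + G.cB ω k j) =
        (n - 1) * ∑ i, (G.cA ω k i + G.cB ω k i) := by
      have e : ∀ i : Fin n, ∑ j ∈ Finset.univ.erase i, (G.cA ω k i + G.cB ω k j) =
          (n - 1) * G.cA ω k i + (∑ j, G.cB ω k j - G.cB ω k i) := by
        intro i
        rw [Finset.sum_add_distrib, Finset.sum_erase_eq_sub (Finset.mem_univ i)]
        simp
        ring
      simp only [e]
      rw [Finset.sum_add_distrib, Finset.sum_sub_distrib, Finset.sum_add_distrib, ← Finset.mul_sum]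
      simp
      ring
    rw [← this]
    refine Finset.sum_le_sum fun i _ => (Finset.abs_sum_le_sum_abs _ _).trans ?_
    exact Finset.sum_le_sum fun j hj => G.dH hq ω i j k (Finset.ne_of_mem_erase hj).symm
  calc _ ≤ ((n:ℝ) * (n-1))⁻¹ * ((n - 1) * ∑ i, (G.cA ω k i + G.cB ω k i)) :=
        mul_le_mul_of_nonneg_left this (inv_pos.2 h0).le
    _ = _ := by
        have : (n:ℝ) - 1 ≠ 0 := by linarith
        rw [mul_inv]; field_simp

theorem abs_F_le {q : ℕ → ℝ} (hq : ∀ k, 0 ≤ q k ∧ q k ≤ 1) (ω : Fin n → E) :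
    |G.F q ω| ≤ |((n:ℝ) * (n-1))⁻¹| * (n * (n * (G.K + 1))) := by
  unfold F
  rw [abs_mul]
  have hK : (0:ℝ) ≤ G.K := by positivity
  refine mul_le_mul_of_nonneg_left ((Finset.abs_sum_le_sum_abs _ _).trans ?_) (abs_nonneg _)
  refine (Finset.sum_le_card_nsmul _ _ (n * ((G.K:ℝ) + 1)) fun i _ => ?_).trans (by simp)
  refine (Finset.abs_sum_le_sum_abs _ _).trans ?_
  refine (Finset.sum_le_card_nsmul _ _ ((G.K:ℝ) + 1) fun j hj => ?_).trans ?_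
  · have h := G.H_bd hq ω i j (Finset.ne_of_mem_erase hj).symm
    exact abs_le.2 ⟨by linarith, by linarith⟩
  · rw [nsmul_eq_mul]
    refine mul_le_mul_of_nonneg_right ?_ (by linarith)
    exact_mod_cast (Finset.card_le_univ _).trans (by simp)

end Geo

namespace Geo
variable {E : Type} [MeasurableSpace E] (G : Geo E) {n : ℕ}

/-- local weight -/
def xi (x y : E) : ℝ :=
  (if G.adj3 x y then 2 * (G.K : ℝ) + 1 else 0) + (if G.adj2 x y then (G.K : ℝ) + 1 else 0)

theorem meas_xi : Measurable (fun q : E × E => G.xi q.1 q.2) :=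
  (Measurable.ite G.m3 measurable_const measurable_const).add
    (Measurable.ite G.m2 measurable_const measurable_const)

theorem xi_nonneg (x y : E) : 0 ≤ G.xi x y := by
  unfold xi; have : (0:ℝ) ≤ G.K := by positivity
  split_ifs <;> linarith

theorem abs_xi (x y : E) : |G.xi x y| ≤ 3 * (G.K : ℝ) + 2 := by
  rw [abs_of_nonneg (G.xi_nonneg x y)]
  unfold xi; have : (0:ℝ) ≤ G.K := by positivity
  split_ifs <;> linarith

/-- first moment bound -/
def bb : ℝ := (2 * (G.K : ℝ) + 1) * G.p3 + ((G.K : ℝ) + 1) * G.p2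
/-- second moment bound -/
def cc : ℝ := (2 * (G.K : ℝ) + 1) ^ 2 * G.p3 +
  (((G.K : ℝ) + 1) ^ 2 + 2 * (2 * (G.K : ℝ) + 1) * ((G.K : ℝ) + 1)) * G.p2

theorem p2_nonneg : 0 ≤ G.p2 := (measureReal_nonneg).trans (G.hp2 G.γ)
theorem p3_nonneg : 0 ≤ G.p3 := (measureReal_nonneg).trans (G.hp3 G.γ)

theorem bb_nonneg : 0 ≤ G.bb := by
  have := G.p2_nonneg; have := G.p3_nonneg; unfold bb; positivity
theorem cc_nonneg : 0 ≤ G.cc := by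
  have := G.p2_nonneg; have := G.p3_nonneg; unfold cc; positivity

theorem int_ite {s : E → Prop} (hs : MeasurableSet {x | s x}) (c : ℝ) :
    ∫ x, (if s x then c else 0) ∂G.μ = c * G.μ.real {x | s x} := by
  have : (fun x => if s x then c else 0) = {x | s x}.indicator (fun _ => c) := by
    ext z; simp [indicator]
  rw [this, integral_indicator hs]
  simp [mul_comm]

theorem intble_ite {s : E → Prop} (hs : MeasurableSet {x | s x}) (c : ℝ) :
    Integrable (fun x => if s x then c else 0) G.μ :=
  intble_bdd _ (Measurable.ite hs measurable_const measurable_const) (C := |c|) (fun x => by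
    split_ifs; rfl; simp)

theorem ms2 (y : E) : MeasurableSet {x | G.adj2 x y} :=
  (measurable_id.prodMk measurable_const : Measurable fun x : E => (x, y)) G.m2
theorem ms3 (y : E) : MeasurableSet {x | G.adj3 x y} :=
  (measurable_id.prodMk measurable_const : Measurable fun x : E => (x, y)) G.m3

theorem int_xi (y : E) : ∫ x, G.xi x y ∂G.μ ≤ G.bb := by
  unfold xi bb
  rw [integral_add (G.intble_ite (G.ms3 y) _) (G.intble_ite (G.ms2 y) _),
    G.int_ite (G.ms3 y), G.int_ite (G.ms2 y)]
  have := G.hp2 y; have := G.hp3 y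
  gcongr

theorem int_xi_sq (y : E) : ∫ x, G.xi x y * G.xi x y ∂G.μ ≤ G.cc := by
  have hK : (0:ℝ) ≤ G.K := by positivity
  have h1 : ∀ x, G.xi x y * G.xi x y ≤ (if G.adj3 x y then (2 * (G.K : ℝ) + 1) ^ 2 else 0) +
      (if G.adj2 x y then (((G.K : ℝ) + 1) ^ 2 + 2 * (2 * (G.K : ℝ) + 1) * ((G.K : ℝ) + 1)) else 0) := by
    intro x; unfold xi
    split_ifs <;> nlinarith
  have hm : Measurable (fun x => G.xi x y) :=
    G.meas_xi.comp (measurable_id.prodMk measurable_const)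
  have i1 : Integrable (fun x => G.xi x y * G.xi x y) G.μ :=
    intble_bdd _ (hm.mul hm) (C := (3 * (G.K : ℝ) + 2) * (3 * (G.K : ℝ) + 2)) (fun x => by
      rw [abs_mul]; exact mul_le_mul (G.abs_xi x y) (G.abs_xi x y) (abs_nonneg _) (by positivity))
  refine (integral_mono i1 ((G.intble_ite (G.ms3 y) _).add (G.intble_ite (G.ms2 y) _)) h1).trans ?_
  rw [integral_add' (G.intble_ite (G.ms3 y) _) (G.intble_ite (G.ms2 y) _),
    G.int_ite (G.ms3 y), G.int_ite (G.ms2 y)]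
  unfold cc
  have := G.hp2 y; have := G.hp3 y
  gcongr

theorem sum_c (ω : Fin n → E) (k : Fin n) : ∑ i, (G.cA ω k i + G.cB ω k i) =
    2 * ((G.K : ℝ) + 1) + ∑ i ∈ Finset.univ.erase k, G.xi (ω i) (ω k) := by
  rw [← Finset.add_sum_erase _ _ (Finset.mem_univ k)]
  congr 1
  · simp [cA, cB]; ring
  · refine Finset.sum_congr rfl fun i hi => ?_
    have := Finset.ne_of_mem_erase hi
    simp [cA, cB, xi, this]

theorem meas_xiω (i k : Fin n) : Measurable (fun ω : Fin n → E => G.xi (ω i) (ω k)) := by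
  have h : Measurable (fun ω : Fin n → E => (ω i, ω k)) :=
    (measurable_pi_apply i).prodMk (measurable_pi_apply k)
  exact G.meas_xi.comp h

theorem abs_mul_xi (a b c d : E) : |G.xi a b * G.xi c d| ≤
    (3 * (G.K : ℝ) + 2) * (3 * (G.K : ℝ) + 2) := by
  rw [abs_mul]; exact mul_le_mul (G.abs_xi _ _) (G.abs_xi _ _) (abs_nonneg _) (by positivity)

theorem E_xi (i k : Fin n) (h : i ≠ k) : ∫ ω, G.xi (ω i) (ω k) ∂(G.P n) ≤ G.bb := by
  unfold P
  rw [integral_upd G.μ i (G.meas_xiω i k) (fun ω => G.abs_xi _ _)]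
  simp only [Function.update_self, Function.update_of_ne h.symm]
  have : ∀ ω : Fin n → E, |∫ x, G.xi x (ω k) ∂G.μ| ≤ 3 * (G.K : ℝ) + 2 :=
    fun ω => abs_integral_le _ (fun x => G.abs_xi _ _)
  refine (integral_mono (intble_bdd _ ?_ this) (integrable_const G.bb)
    (fun ω => G.int_xi (ω k))).trans (by simp)
  have hk : Measurable (fun ω : Fin n → E => ω k) := measurable_pi_apply k
  have hg : Measurable (fun y => ∫ x, G.xi x y ∂G.μ) := (G.meas_xi.stronglyMeasurable.integral_prod_left').measurable
  exact hg.comp hk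

theorem E_xi_sq (i k : Fin n) (h : i ≠ k) :
    ∫ ω, G.xi (ω i) (ω k) * G.xi (ω i) (ω k) ∂(G.P n) ≤ G.cc := by
  unfold P
  rw [integral_upd G.μ i (f := fun ω => G.xi (ω i) (ω k) * G.xi (ω i) (ω k)) ((G.meas_xiω i k).mul (G.meas_xiω i k)) (fun ω => G.abs_mul_xi _ _ _ _)]
  simp only [Pi.mul_apply, Function.update_self, Function.update_of_ne h.symm]
  have : ∀ ω : Fin n → E, |∫ x, G.xi x (ω k) * G.xi x (ω k) ∂G.μ| ≤ _ :=
    fun ω => abs_integral_le _ (fun x => G.abs_mul_xi _ _ _ _)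
  refine (integral_mono (intble_bdd _ ?_ this) (integrable_const G.cc)
    (fun ω => G.int_xi_sq (ω k))).trans (by simp)
  have hk : Measurable (fun ω : Fin n → E => ω k) := measurable_pi_apply k
  have hg : Measurable (fun y => ∫ x, G.xi x y * G.xi x y ∂G.μ) := ((G.meas_xi.mul G.meas_xi).stronglyMeasurable.integral_prod_left').measurable
  exact hg.comp hk

theorem E_xi_xi (i i' k : Fin n) (h : i ≠ k) (h' : i' ≠ k) (hii : i ≠ i') :
    ∫ ω, G.xi (ω i) (ω k) * G.xi (ω i') (ω k) ∂(G.P n) ≤ G.bb * G.bb := by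
  have h0 := G.E_xi i' k h'
  unfold P at *
  rw [integral_upd G.μ i (f := fun ω => G.xi (ω i) (ω k) * G.xi (ω i') (ω k)) ((G.meas_xiω i k).mul (G.meas_xiω i' k)) (fun ω => G.abs_mul_xi _ _ _ _)]
  simp only [Pi.mul_apply, Function.update_self, Function.update_of_ne h.symm,
    Function.update_of_ne hii.symm]
  simp only [integral_mul_const]
  have hb : ∀ ω : Fin n → E, |(∫ x, G.xi x (ω k) ∂G.μ) * G.xi (ω i') (ω k)| ≤
      (3 * (G.K : ℝ) + 2) * (3 * (G.K : ℝ) + 2) := fun ω => by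
    rw [abs_mul]
    exact mul_le_mul (abs_integral_le _ (fun x => G.abs_xi _ _)) (G.abs_xi _ _) (abs_nonneg _)
      (by positivity)
  have hm : Measurable (fun ω : Fin n → E => (∫ x, G.xi x (ω k) ∂G.μ) * G.xi (ω i') (ω k)) := by
    refine Measurable.mul ?_ (G.meas_xiω i' k)
    have hk : Measurable (fun ω : Fin n → E => ω k) := measurable_pi_apply k
    have hg : Measurable (fun y => ∫ x, G.xi x y ∂G.μ) := (G.meas_xi.stronglyMeasurable.integral_prod_left').measurable
    exact hg.comp hk
  refine (integral_mono (intble_bdd _ hm hb)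
    ((intble_bdd _ (G.meas_xiω i' k) (fun ω => G.abs_xi _ _)).const_mul G.bb)
    (fun ω => mul_le_mul_of_nonneg_right (G.int_xi (ω k)) (G.xi_nonneg _ _))).trans ?_
  rw [integral_const_mul]
  exact mul_le_mul_of_nonneg_left h0 G.bb_nonneg

/-- total second moment bound -/
def tot (n : ℕ) : ℝ := (2 * ((G.K : ℝ) + 1)) ^ 2 + 2 * (2 * ((G.K : ℝ) + 1)) * (n * G.bb) +
  n * G.cc + (n * G.bb) ^ 2

theorem E_X_sq (k : Fin n) :
    ∫ ω, (∑ i, (G.cA ω k i + G.cB ω k i)) ^ 2 ∂(G.P n) ≤ G.tot n := by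
  have hK : (0:ℝ) ≤ G.K := by positivity
  set a := 2 * ((G.K : ℝ) + 1) with ha
  have e : ∀ ω : Fin n → E, (∑ i, (G.cA ω k i + G.cB ω k i)) ^ 2 =
      (a ^ 2 + 2 * a * ∑ i ∈ Finset.univ.erase k, G.xi (ω i) (ω k)) +
      ∑ i ∈ Finset.univ.erase k, ∑ i' ∈ Finset.univ.erase k,
        G.xi (ω i) (ω k) * G.xi (ω i') (ω k) := by
    intro ω
    rw [sum_c, ← Finset.sum_mul_sum]; ring
  simp only [e]
  have i1 : ∀ i, Integrable (fun ω : Fin n → E => G.xi (ω i) (ω k)) (G.P n) := fun i =>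
    intble_bdd _ (G.meas_xiω i k) (fun ω => G.abs_xi _ _)
  have i2 : ∀ i i', Integrable (fun ω : Fin n → E => G.xi (ω i) (ω k) * G.xi (ω i') (ω k)) (G.P n) :=
    fun i i' => intble_bdd _ ((G.meas_xiω i k).mul (G.meas_xiω i' k)) (fun ω => G.abs_mul_xi _ _ _ _)
  have i3 : Integrable (fun ω : Fin n → E => ∑ i ∈ Finset.univ.erase k, G.xi (ω i) (ω k)) (G.P n) :=
    integrable_finsetSum _ fun i _ => i1 i
  have i4 : ∀ i, Integrable (fun ω : Fin n → E => ∑ i' ∈ Finset.univ.erase k,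
      G.xi (ω i) (ω k) * G.xi (ω i') (ω k)) (G.P n) := fun i =>
    integrable_finsetSum _ fun i' _ => i2 i i'
  have i5 : Integrable (fun ω : Fin n → E => a ^ 2 + 2 * a * ∑ i ∈ Finset.univ.erase k, G.xi (ω i) (ω k)) (G.P n) :=
    (integrable_const _).add (i3.const_mul _)
  rw [integral_add i5
    (integrable_finsetSum _ fun i _ => i4 i), integral_add (integrable_const _) (i3.const_mul _),
    integral_const_mul, integral_finsetSum _ (fun i _ => i1 i),
    integral_finsetSum _ (fun i _ => i4 i)]
  simp only [integral_finsetSum _ (fun i' _ => i2 _ i')]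
  have hcard : (((Finset.univ : Finset (Fin n)).erase k).card : ℝ) ≤ n := by
    exact_mod_cast (Finset.card_le_univ _).trans (by simp)
  have s1 : ∑ i ∈ Finset.univ.erase k, ∫ ω, G.xi (ω i) (ω k) ∂(G.P n) ≤ n * G.bb := by
    refine (Finset.sum_le_card_nsmul _ _ G.bb fun i hi =>
      G.E_xi i k (Finset.ne_of_mem_erase hi)).trans ?_
    rw [nsmul_eq_mul]
    exact mul_le_mul_of_nonneg_right hcard G.bb_nonneg
  have s2 : ∑ i ∈ Finset.univ.erase k, ∑ i' ∈ Finset.univ.erase k,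
      ∫ ω, G.xi (ω i) (ω k) * G.xi (ω i') (ω k) ∂(G.P n) ≤ n * G.cc + (n * G.bb) ^ 2 := by
    have : ∀ i ∈ Finset.univ.erase k, ∑ i' ∈ Finset.univ.erase k,
        ∫ ω, G.xi (ω i) (ω k) * G.xi (ω i') (ω k) ∂(G.P n) ≤ G.cc + n * (G.bb * G.bb) := by
      intro i hi
      rw [← Finset.add_sum_erase _ _ hi]
      refine add_le_add (G.E_xi_sq i k (Finset.ne_of_mem_erase hi)) ?_
      refine (Finset.sum_le_card_nsmul _ _ (G.bb * G.bb) fun i' hi' =>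
        G.E_xi_xi i i' k (Finset.ne_of_mem_erase hi)
          (Finset.ne_of_mem_erase (Finset.mem_of_mem_erase hi'))
          (Finset.ne_of_mem_erase hi').symm).trans ?_
      rw [nsmul_eq_mul]
      refine mul_le_mul_of_nonneg_right ?_ (mul_nonneg G.bb_nonneg G.bb_nonneg)
      exact_mod_cast (Finset.card_le_univ _).trans (by simp)
    refine (Finset.sum_le_card_nsmul _ _ _ this).trans ?_
    rw [nsmul_eq_mul]
    have h2 : 0 ≤ G.cc + n * (G.bb * G.bb) := by
      have := G.bb_nonneg; have := G.cc_nonneg; positivity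
    have := mul_le_mul_of_nonneg_right hcard h2
    nlinarith
  unfold tot
  rw [← ha]
  simp only [integral_const, probReal_univ, smul_eq_mul, one_mul]
  have : 2 * a * ∑ i ∈ Finset.univ.erase k, ∫ ω, G.xi (ω i) (ω k) ∂(G.P n) ≤ 2 * a * (n * G.bb) :=
    mul_le_mul_of_nonneg_left s1 (by linarith)
  linarith

theorem varF {q : ℕ → ℝ} (hq : ∀ k, 0 ≤ q k ∧ q k ≤ 1) (hn : 2 ≤ n) :
    ∫ ω, G.F q ω ^ 2 ∂(G.P n) - (∫ ω, G.F q ω ∂(G.P n)) ^ 2 ≤ G.tot n / n := by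
  have hn0 : (0:ℝ) < n := by exact_mod_cast (by omega : 0 < n)
  refine (efron G.μ G.γ n (G.F q) G.meas_F _ (fun ω => G.abs_F_le hq ω)).trans ?_
  have hK : (0:ℝ) ≤ G.K := by positivity
  have : ∀ k : Fin n, ∫ ω, (G.F q ω - G.F q (Function.update ω k G.γ)) ^ 2 ∂(G.P n) ≤
      (n : ℝ)⁻¹ ^ 2 * G.tot n := by
    intro k
    have hmu : Measurable (fun ω : Fin n → E => Function.update ω k G.γ) :=
      (upd_mp G.μ k).measurable.comp (measurable_id.prodMk measurable_const)
    have hb : ∀ ω : Fin n → E, |∑ i, (G.cA ω k i + G.cB ω k i)| ≤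
        n * (3 * G.K + 3) := fun ω => by
      refine (Finset.abs_sum_le_sum_abs _ _).trans ?_
      refine (Finset.sum_le_card_nsmul _ _ (3 * (G.K:ℝ) + 3) fun i _ => ?_).trans (le_of_eq (by simp; ring))
      unfold cA cB
      apply abs_le.2
      split_ifs <;> constructor <;> linarith
    have hm : Measurable (fun ω : Fin n → E => ∑ i, (G.cA ω k i + G.cB ω k i)) := by
      simp only [sum_c]
      exact measurable_const.add (Finset.measurable_sum _ fun i _ => G.meas_xiω i k)
    have ib : Integrable (fun ω : Fin n → E => (∑ i, (G.cA ω k i + G.cB ω k i)) ^ 2) (G.P n) :=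
      intble_bdd _ (hm.pow_const 2) (C := (n * (3 * G.K + 3)) ^ 2) (fun ω => by
        rw [abs_pow]; exact pow_le_pow_left₀ (abs_nonneg _) (hb ω) 2)
    have hpt : ∀ ω : Fin n → E, (G.F q ω - G.F q (Function.update ω k G.γ)) ^ 2 ≤
        (n : ℝ)⁻¹ ^ 2 * (∑ i, (G.cA ω k i + G.cB ω k i)) ^ 2 := fun ω => by
      rw [← mul_pow, ← sq_abs]
      exact pow_le_pow_left₀ (abs_nonneg _) (G.dF hq hn ω k) 2
    refine (integral_mono_of_nonneg (Eventually.of_forall fun ω => sq_nonneg _)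
      (ib.const_mul _) (Eventually.of_forall hpt)).trans ?_
    rw [integral_const_mul]
    exact mul_le_mul_of_nonneg_left (G.E_X_sq k) (by positivity)
  refine (Finset.sum_le_card_nsmul _ _ _ fun k _ => this k).trans (le_of_eq ?_)
  simp
  field_simp

end Geo

namespace Geo
variable {E : Type} [MeasurableSpace E] (G : Geo E) {n : ℕ}

theorem meas_upd (G : Geo E) (j : Fin n) : Measurable (fun q : (Fin n → E) × E => Function.update q.1 j q.2) :=
  (upd_mp G.μ j).measurable

theorem meas_qnb (q : ℕ → ℝ) (i : Fin n) : Measurable (fun ω : Fin n → E => q (G.nb ω i)) :=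
  (measurable_of_countable q).comp (G.meas_nb i)

/-- density of a move -/
def mv (q : ℕ → ℝ) (i : Fin n) (a : (Fin n → E) × E) : ℝ := q (G.nb a.1 i) * G.w (a.1 i) a.2

theorem meas_mv (q : ℕ → ℝ) (i : Fin n) : Measurable (G.mv q i) := by
  have h1 : Measurable (fun p : (Fin n → E) × E => (p.1 i, p.2)) :=
    ((measurable_pi_apply i).comp measurable_fst).prodMk measurable_snd
  exact ((G.meas_qnb q i).comp measurable_fst).mul (G.meas_w.comp h1)

theorem mv_nonneg {q : ℕ → ℝ} (hq : ∀ k, 0 ≤ q k ∧ q k ≤ 1) (i : Fin n) (a) : 0 ≤ G.mv q i a :=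
  mul_nonneg (hq _).1 (G.w_nonneg _ _)

theorem abs_mv {q : ℕ → ℝ} (hq : ∀ k, 0 ≤ q k ∧ q k ≤ 1) (i : Fin n) (a) :
    |G.mv q i a| ≤ G.p⁻¹ := by
  rw [abs_of_nonneg (G.mv_nonneg hq i a)]
  have h1 := G.w_le (a.1 i) a.2
  have h0 := G.w_nonneg (a.1 i) a.2
  calc _ ≤ 1 * G.w (a.1 i) a.2 := mul_le_mul_of_nonneg_right (hq _).2 h0
    _ ≤ _ := by linarith

/-- stay part -/
def mA (q : ℕ → ℝ) (i : Fin n) : Measure ((Fin n → E) × (Fin n → E)) :=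
  ((G.P n).withDensity (fun ω => ENNReal.ofReal (1 - q (G.nb ω i)))).map (fun ω => (ω, ω))

/-- move part -/
def mB (q : ℕ → ℝ) (i j : Fin n) : Measure ((Fin n → E) × (Fin n → E)) :=
  (((G.P n).prod G.μ).withDensity (fun a => ENNReal.ofReal (G.mv q i a))).map
    (fun a => (a.1, Function.update a.1 j a.2))

/-- coupling measure -/
def Qm (n : ℕ) (q : ℕ → ℝ) : Measure ((Fin n → E) × (Fin n → E)) :=
  (((n : ℝ) * (n - 1))⁻¹).toNNReal • ∑ i, ∑ j ∈ Finset.univ.erase i, (G.mA q i + G.mB q i j)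

theorem meas_st {q : ℕ → ℝ} (i : Fin n) : Measurable (fun ω : Fin n → E => 1 - q (G.nb ω i)) :=
  measurable_const.sub (G.meas_qnb q i)

theorem abs_st {q : ℕ → ℝ} (hq : ∀ k, 0 ≤ q k ∧ q k ≤ 1) (i : Fin n) (ω : Fin n → E) :
    |1 - q (G.nb ω i)| ≤ 1 := by
  have := hq (G.nb ω i); exact abs_le.2 ⟨by linarith, by linarith⟩

theorem fin_mA {q : ℕ → ℝ} (hq : ∀ k, 0 ≤ q k ∧ q k ≤ 1) (i : Fin n) :
    IsFiniteMeasure (G.mA q i) := by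
  have := isFiniteMeasure_withDensity_ofReal
    (intble_bdd (G.P n) (G.meas_st i) (G.abs_st hq i)).hasFiniteIntegral
  unfold mA; infer_instance

theorem fin_mB {q : ℕ → ℝ} (hq : ∀ k, 0 ≤ q k ∧ q k ≤ 1) (i j : Fin n) :
    IsFiniteMeasure (G.mB q i j) := by
  have := isFiniteMeasure_withDensity_ofReal
    (intble_bdd ((G.P n).prod G.μ) (G.meas_mv q i) (G.abs_mv hq i)).hasFiniteIntegral
  unfold mB; infer_instance

theorem fin_Q {q : ℕ → ℝ} (hq : ∀ k, 0 ≤ q k ∧ q k ≤ 1) : IsFiniteMeasure (G.Qm n q) := by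
  have := G.fin_mA (n := n) hq
  have := G.fin_mB (n := n) hq
  unfold Qm; infer_instance

theorem int_mA {q : ℕ → ℝ} (hq : ∀ k, 0 ≤ q k ∧ q k ≤ 1) (i : Fin n)
    {Φ : (Fin n → E) × (Fin n → E) → ℝ} (hΦ : Measurable Φ) :
    ∫ a, Φ a ∂(G.mA q i) = ∫ ω, (1 - q (G.nb ω i)) * Φ (ω, ω) ∂(G.P n) := by
  unfold mA
  have hd : Measurable (fun ω : Fin n → E => (ω, ω)) := measurable_id.prodMk measurable_id
  rw [integral_map hd.aemeasurable hΦ.aestronglyMeasurable,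
    integral_withDensity_eq_integral_toReal_smul (G.meas_st i).ennreal_ofReal
      (Eventually.of_forall fun _ => ENNReal.ofReal_lt_top)]
  refine integral_congr_ae (Eventually.of_forall fun ω => ?_)
  have := (hq (G.nb ω i)).2
  beta_reduce
  rw [ENNReal.toReal_ofReal (by linarith), smul_eq_mul]

theorem int_mB {q : ℕ → ℝ} (hq : ∀ k, 0 ≤ q k ∧ q k ≤ 1) (i j : Fin n)
    {Φ : (Fin n → E) × (Fin n → E) → ℝ} (hΦ : Measurable Φ) {C : ℝ} (hC : ∀ a, |Φ a| ≤ C) :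
    ∫ a, Φ a ∂(G.mB q i j) = ∫ ω, q (G.nb ω i) *
      ∫ z, G.w (ω i) z * Φ (ω, Function.update ω j z) ∂G.μ ∂(G.P n) := by
  have hm : Measurable (fun a : (Fin n → E) × E => (a.1, Function.update a.1 j a.2)) :=
    measurable_fst.prodMk (G.meas_upd j)
  unfold mB
  rw [integral_map hm.aemeasurable hΦ.aestronglyMeasurable,
    integral_withDensity_eq_integral_toReal_smul (G.meas_mv q i).ennreal_ofReal
      (Eventually.of_forall fun _ => ENNReal.ofReal_lt_top)]
  have e : ∀ a : (Fin n → E) × E, (ENNReal.ofReal (G.mv q i a)).toReal •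
      Φ (a.1, Function.update a.1 j a.2) = G.mv q i a * Φ (a.1, Function.update a.1 j a.2) := by
    intro a
    rw [ENNReal.toReal_ofReal (G.mv_nonneg hq i a), smul_eq_mul]
  simp only [e]
  rw [integral_prod]
  · simp only [mv, mul_assoc, integral_const_mul]
  · refine intble_bdd _ ((G.meas_mv q i).mul (hΦ.comp hm)) (C := G.p⁻¹ * C) fun a => ?_
    rw [abs_mul]
    exact mul_le_mul (G.abs_mv hq i a) (hC _) (abs_nonneg _) (by have := G.p0; positivity)

theorem int_Q {q : ℕ → ℝ} (hq : ∀ k, 0 ≤ q k ∧ q k ≤ 1) (hn : 2 ≤ n)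
    {Φ : (Fin n → E) × (Fin n → E) → ℝ} (hΦ : Measurable Φ) {C : ℝ} (hC : ∀ a, |Φ a| ≤ C) :
    ∫ a, Φ a ∂(G.Qm n q) = ((n : ℝ) * (n - 1))⁻¹ * ∑ i, ∑ j ∈ Finset.univ.erase i,
      ((∫ ω, (1 - q (G.nb ω i)) * Φ (ω, ω) ∂(G.P n)) + ∫ ω, q (G.nb ω i) *
      ∫ z, G.w (ω i) z * Φ (ω, Function.update ω j z) ∂G.μ ∂(G.P n)) := by
  have := G.fin_mA (n := n) hq
  have := G.fin_mB (n := n) hq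
  have hn2 : (2:ℝ) ≤ n := by exact_mod_cast hn
  unfold Qm
  rw [integral_smul_nnreal_measure, NNReal.smul_def, Real.coe_toNNReal, smul_eq_mul,
    integral_finsetSum_measure (fun i _ => intble_bdd _ hΦ hC)]
  · congr 1
    refine Finset.sum_congr rfl fun i _ => ?_
    rw [integral_finsetSum_measure (fun i _ => intble_bdd _ hΦ hC)]
    refine Finset.sum_congr rfl fun j _ => ?_
    rw [integral_add_measure (intble_bdd _ hΦ hC) (intble_bdd _ hΦ hC), G.int_mA hq i hΦ,
      G.int_mB hq i j hΦ hC]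
  · have : (0:ℝ) ≤ n - 1 := by linarith
    positivity

theorem ae_w (i : Fin n) : ∀ᵐ ω ∂(G.P n), G.μ.real {z | G.adj (ω i) z} = G.p :=
  (measurePreserving_eval (fun _ : Fin n => G.μ) i).quasiMeasurePreserving.ae G.hpe

theorem ae_w1 (i : Fin n) : ∀ᵐ ω ∂(G.P n), ∫ z, G.w (ω i) z ∂G.μ = 1 :=
  (measurePreserving_eval (fun _ : Fin n => G.μ) i).quasiMeasurePreserving.ae G.int_w_ae

theorem card_erase_r (G : Geo E) (hn : 2 ≤ n) (i : Fin n) :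
    (((Finset.univ : Finset (Fin n)).erase i).card : ℝ) = n - 1 := by
  rw [Finset.card_erase_of_mem (Finset.mem_univ i), Finset.card_univ, Fintype.card_fin,
    Nat.cast_sub (by omega)]; simp

theorem int_Q_fst {q : ℕ → ℝ} (hq : ∀ k, 0 ≤ q k ∧ q k ≤ 1) (hn : 2 ≤ n)
    {g : (Fin n → E) → ℝ} (hg : Measurable g) {C : ℝ} (hC : ∀ a, |g a| ≤ C) :
    ∫ a, g a.1 ∂(G.Qm n q) = ∫ ω, g ω ∂(G.P n) := by
  have hn2 : (2:ℝ) ≤ n := by exact_mod_cast hn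
  rw [G.int_Q hq hn (Φ := fun a => g a.1) (hg.comp measurable_fst) (fun a => hC _)]
  have e : ∀ i : Fin n, (∫ ω, (1 - q (G.nb ω i)) * g ω ∂(G.P n)) + ∫ ω, q (G.nb ω i) *
      ∫ z, G.w (ω i) z * g ω ∂G.μ ∂(G.P n) = ∫ ω, g ω ∂(G.P n) := by
    intro i
    have h1 : ∫ ω, q (G.nb ω i) * ∫ z, G.w (ω i) z * g ω ∂G.μ ∂(G.P n) =
        ∫ ω, q (G.nb ω i) * g ω ∂(G.P n) := by
      refine integral_congr_ae ?_
      filter_upwards [G.ae_w1 i] with ω hω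
      rw [integral_mul_const, hω, one_mul]
    have hC0 : 0 ≤ C := (abs_nonneg _).trans (hC (fun _ => G.γ))
    rw [h1, ← integral_add]
    · refine integral_congr_ae (Eventually.of_forall fun ω => ?_)
      simp only; ring
    · refine intble_bdd _ ((G.meas_st i).mul hg) (C := 1 * C) fun ω => ?_
      rw [abs_mul]; exact mul_le_mul (G.abs_st hq i ω) (hC _) (abs_nonneg _) zero_le_one
    · refine intble_bdd _ ((G.meas_qnb q i).mul hg) (C := 1 * C) fun ω => ?_
      rw [abs_mul]; refine mul_le_mul ?_ (hC _) (abs_nonneg _) zero_le_one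
      rw [abs_of_nonneg (hq _).1]; exact (hq _).2
  simp only [e, Finset.sum_const, nsmul_eq_mul, G.card_erase_r hn]
  rw [Finset.card_univ, Fintype.card_fin]
  have : (n:ℝ) - 1 ≠ 0 := by linarith
  field_simp

theorem prob_Q {q : ℕ → ℝ} (hq : ∀ k, 0 ≤ q k ∧ q k ≤ 1) (hn : 2 ≤ n) :
    IsProbabilityMeasure (G.Qm n q) := by
  have := G.fin_Q (n := n) hq
  have h := G.int_Q_fst (n := n) hq hn (g := fun _ => 1) measurable_const (C := 1) (by simp)
  simp at h
  rw [measureReal_def, ENNReal.toReal_eq_one_iff] at h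
  exact ⟨h⟩

theorem map_fst_Q {q : ℕ → ℝ} (hq : ∀ k, 0 ≤ q k ∧ q k ≤ 1) (hn : 2 ≤ n) :
    (G.Qm n q).map Prod.fst = G.P n := by
  have := G.fin_Q (n := n) hq
  ext s hs
  rw [Measure.map_apply measurable_fst hs]
  have h := G.int_Q_fst (n := n) hq hn (g := s.indicator 1) (measurable_one.indicator hs) (C := 1)
    (by intro a; by_cases h : a ∈ s <;> simp [h])
  rw [integral_indicator_one hs] at h
  have h2 : (fun a : (Fin n → E) × (Fin n → E) => s.indicator (1 : (Fin n → E) → ℝ) a.1) =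
    (Prod.fst ⁻¹' s).indicator 1 := by ext a; simp [indicator]
  rw [h2, integral_indicator_one (measurable_fst hs)] at h
  rwa [measureReal_def, measureReal_def, ENNReal.toReal_eq_toReal_iff' (measure_ne_top _ _)
    (measure_ne_top _ _)] at h

theorem ae_bd {q : ℕ → ℝ} (hq : ∀ k, 0 ≤ q k ∧ q k ≤ 1) (hn : 2 ≤ n) :
    ∀ᵐ a ∂(G.Qm n q), |G.W a.2 - G.W a.1| ≤ (G.K : ℝ) + 1 := by
  have := G.fin_Q (n := n) hq
  have hms : MeasurableSet {a : (Fin n → E) × (Fin n → E) | ¬ |G.W a.2 - G.W a.1| ≤ (G.K : ℝ) + 1} := by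
    have hm : Measurable (fun a : (Fin n → E) × (Fin n → E) => |G.W a.2 - G.W a.1|) :=
      ((G.meas_W.comp measurable_snd).sub (G.meas_W.comp measurable_fst)).norm
    exact (measurableSet_le hm measurable_const).compl
  rw [ae_iff]
  set s := {a : (Fin n → E) × (Fin n → E) | ¬ |G.W a.2 - G.W a.1| ≤ (G.K : ℝ) + 1} with hs
  have h := G.int_Q (n := n) hq hn (Φ := s.indicator 1) (measurable_one.indicator hms) (C := 1)
    (by intro a; by_cases h : a ∈ s <;> simp [h])
  rw [integral_indicator_one hms] at h
  have h1 : ∀ ω : Fin n → E, (ω, ω) ∉ s := by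
    intro ω; simp only [hs, mem_ofPred_eq, not_not, sub_self, abs_zero]; positivity
  have h2 : ∀ (ω : Fin n → E) j z, (ω, Function.update ω j z) ∉ s := by
    intro ω j z
    simp only [hs, mem_ofPred_eq, not_not]
    rw [G.W_upd, G.W_eq ω j, add_sub_add_left_eq_sub]
    exact G.abs_dd _ _ _ _
  simp [h1, h2] at h
  rwa [measureReal_eq_zero_iff] at h

end Geo

namespace Geo
variable {E : Type} [MeasurableSpace E] (G : Geo E) {n : ℕ}

theorem Tval (q : ℕ → ℝ) (i j : Fin n) (hij : j ≠ i) (ω : Fin n → E)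
    (hj : G.adj (ω i) (ω j)) (hp : G.μ.real {z | G.adj (ω i) z} = G.p) :
    ∫ x, q (G.nb (Function.update ω j x) i) ∂G.μ =
      G.p * q (G.nb ω i) + (1 - G.p) * q (G.nb ω i - 1) := by
  have hs : MeasurableSet {z | G.adj (ω i) z} := G.ms_adj measurable_const measurable_id
  have : ∀ x, q (G.nb (Function.update ω j x) i) =
      (if G.adj (ω i) x then (q (G.nb ω i) - q (G.nb ω i - 1)) else 0) + q (G.nb ω i - 1) := by
    intro x
    rw [G.nb_upd ω i j hij x hj]
    split_ifs <;> ring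
  simp only [this]
  rw [integral_add (G.intble_ite hs _) (integrable_const _), G.int_ite hs, hp]
  simp; ring

theorem abs_q {q : ℕ → ℝ} (hq : ∀ k, 0 ≤ q k ∧ q k ≤ 1) (k : ℕ) : |q k| ≤ 1 := by
  rw [abs_of_nonneg (hq _).1]; exact (hq _).2

theorem int_move {q : ℕ → ℝ} (hq : ∀ k, 0 ≤ q k ∧ q k ≤ 1) (i j : Fin n) (hij : j ≠ i)
    {h : (Fin n → E) → ℝ} (hh : Measurable h) {C : ℝ} (hC : ∀ a, |h a| ≤ C) :
    ∫ ω, q (G.nb ω i) * ∫ z, G.w (ω i) z * h (Function.update ω j z) ∂G.μ ∂(G.P n) =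
    ∫ ω, h ω * ((if j ≠ i ∧ G.adj (ω i) (ω j) then 1 else 0) *
      (q (G.nb ω i) + (1 - G.p) / G.p * q (G.nb ω i - 1))) ∂(G.P n) := by
  have hp0 := G.p0
  have hC0 : 0 ≤ C := (abs_nonneg _).trans (hC (fun _ => G.γ))
  have hpi : Measurable (fun ω : Fin n → E => ω i) := measurable_pi_apply i
  have hpj : Measurable (fun ω : Fin n → E => ω j) := measurable_pi_apply j
  have hI : Measurable (fun ω : Fin n → E =>
      ∫ z, G.w (ω i) z * h (Function.update ω j z) ∂G.μ) := by
    refine (Measurable.stronglyMeasurable (f := fun p : (Fin n → E) × E =>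
      G.w (p.1 i) p.2 * h (Function.update p.1 j p.2)) ?_).integral_prod_right'.measurable
    have h1 : Measurable (fun p : (Fin n → E) × E => (p.1 i, p.2)) :=
      (hpi.comp measurable_fst).prodMk measurable_snd
    exact (G.meas_w.comp h1).mul (hh.comp (G.meas_upd j))
  have hwh : ∀ x z ω, |G.w x z * h ω| ≤ G.p⁻¹ * C := fun x z ω => by
    rw [abs_mul]; exact mul_le_mul (G.abs_w x z) (hC ω) (abs_nonneg _) (by positivity)
  have hT : Measurable (fun ω : Fin n → E => ∫ x, q (G.nb (Function.update ω j x) i) ∂G.μ) := by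
    refine (Measurable.stronglyMeasurable (f := fun p : (Fin n → E) × E =>
      q (G.nb (Function.update p.1 j p.2) i)) ?_).integral_prod_right'.measurable
    exact (G.meas_qnb q i).comp (G.meas_upd j)
  have e1 := integral_upd G.μ j (f := fun ω : Fin n → E => q (G.nb ω i) *
    ∫ z, G.w (ω i) z * h (Function.update ω j z) ∂G.μ) ((G.meas_qnb q i).mul hI)
    (C := 1 * (G.p⁻¹ * C)) (fun ω => by
      rw [abs_mul]
      exact mul_le_mul (abs_q hq _) (abs_integral_le _ fun z => hwh _ _ _) (abs_nonneg _) zero_le_one)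
  have e2 := integral_upd G.μ j (f := fun ω : Fin n → E => G.w (ω i) (ω j) * h ω *
    ∫ x, q (G.nb (Function.update ω j x) i) ∂G.μ)
    (((G.meas_w.comp (hpi.prodMk hpj)).mul hh).mul hT)
    (C := (G.p⁻¹ * C) * 1) (fun ω => by
      rw [abs_mul]
      exact mul_le_mul (hwh _ _ _) (abs_integral_le _ fun z => abs_q hq _) (abs_nonneg _)
        (by positivity))
  simp only [Function.update_idem, Function.update_of_ne hij.symm, Function.update_self,
    integral_mul_const] at e1 e2
  unfold P
  rw [e1]
  have e3 : ∀ ω : Fin n → E, (∫ x, q (G.nb (Function.update ω j x) i) ∂G.μ) *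
      (∫ z, G.w (ω i) z * h (Function.update ω j z) ∂G.μ) =
      (∫ z, G.w (ω i) z * h (Function.update ω j z) ∂G.μ) *
      ∫ x, q (G.nb (Function.update ω j x) i) ∂G.μ := fun ω => mul_comm _ _
  simp only [e3]
  rw [← e2]
  refine integral_congr_ae ?_
  filter_upwards [G.ae_w i] with ω hω
  by_cases ha : G.adj (ω i) (ω j)
  · rw [G.Tval q i j hij ω ha hω]
    simp only [w, ha, hij, if_true, ne_eq, not_false_eq_true, and_self, one_mul]
    field_simp
  · simp [w, ha]

theorem int_Q_snd {q : ℕ → ℝ} (hq : ∀ k, 0 ≤ q k ∧ q k ≤ 1) (hn : 2 ≤ n) {c : ℝ}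
    (hc : ∀ k, k ≤ n - 1 → 1 - q k + (k / (n - 1 : ℕ) : ℝ) * q k +
      (k / (n - 1 : ℕ) : ℝ) * ((1 - G.p) / G.p) * q (k - 1) = (1 + c) * (if 1 ≤ k then 1 else 0))
    {h : (Fin n → E) → ℝ} (hh : Measurable h) {C : ℝ} (hC : ∀ a, |h a| ≤ C) :
    ∫ a, h a.2 ∂(G.Qm n q) = (1 + c) / n * ∫ ω, G.W ω * h ω ∂(G.P n) := by
  have hp0 := G.p0
  have hp1 := G.p1
  have hr : 0 ≤ (1 - G.p) / G.p := div_nonneg (by linarith) hp0.le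
  have hC0 : 0 ≤ C := (abs_nonneg _).trans (hC (fun _ => G.γ))
  have hn2 : (2:ℝ) ≤ n := by exact_mod_cast hn
  have hn1 : ((n - 1 : ℕ) : ℝ) = n - 1 := by rw [Nat.cast_sub (by omega)]; simp
  have hpos : (0:ℝ) < n - 1 := by linarith
  rw [G.int_Q hq hn (Φ := fun a => h a.2) (hh.comp measurable_snd) (fun a => hC _)]
  set r := (1 - G.p) / G.p with hrdef
  have hmJ : ∀ i j : Fin n, Measurable (fun ω : Fin n → E =>
      h ω * ((if j ≠ i ∧ G.adj (ω i) (ω j) then 1 else 0) *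
      (q (G.nb ω i) + r * q (G.nb ω i - 1)))) := by
    intro i j
    refine hh.mul (Measurable.mul (Measurable.ite ?_ measurable_const measurable_const)
      ((G.meas_qnb q i).add ((G.meas_qnb (fun k => q (k-1)) i).const_mul r)))
    exact (MeasurableSet.const _).inter (G.ms_adj (measurable_pi_apply i) (measurable_pi_apply j))
  have hJ : ∀ i j : Fin n, Integrable (fun ω : Fin n → E =>
      h ω * ((if j ≠ i ∧ G.adj (ω i) (ω j) then 1 else 0) *
      (q (G.nb ω i) + r * q (G.nb ω i - 1)))) (G.P n) := by
    intro i j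
    refine intble_bdd _ (hmJ i j) (C := C * (1 * (1 + r * 1))) fun ω => ?_
    have h1 := hq (G.nb ω i)
    have h2 := hq (G.nb ω i - 1)
    rw [abs_mul, abs_mul]
    refine mul_le_mul (hC _) (mul_le_mul ?_ ?_ (abs_nonneg _) zero_le_one) (by positivity) hC0
    · split_ifs <;> simp
    · rw [abs_of_nonneg (by nlinarith [mul_nonneg hr h2.1])]
      nlinarith [mul_le_mul_of_nonneg_left h2.2 hr]
  have hS : ∀ i : Fin n, Integrable (fun ω : Fin n → E => (1 - q (G.nb ω i)) * h ω) (G.P n) := by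
    intro i
    refine intble_bdd _ ((G.meas_st i).mul hh) (C := 1 * C) fun ω => ?_
    rw [abs_mul]; exact mul_le_mul (G.abs_st hq i ω) (hC _) (abs_nonneg _) zero_le_one
  have hI : ∀ i : Fin n, Integrable (fun ω : Fin n → E =>
      (if ∃ j, j ≠ i ∧ G.adj (ω i) (ω j) then 1 else 0) * h ω) (G.P n) := by
    intro i
    refine intble_bdd _ (Measurable.mul (Measurable.ite ?_ measurable_const measurable_const) hh)
      (C := 1 * C) fun ω => ?_
    · rw [ofPred_exists]
      refine MeasurableSet.iUnion fun j => ?_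
      exact (MeasurableSet.const _).inter (G.ms_adj (measurable_pi_apply i) (measurable_pi_apply j))
    · rw [abs_mul]; refine mul_le_mul ?_ (hC _) (abs_nonneg _) zero_le_one
      split_ifs <;> simp
  have hSJ : ∀ i j : Fin n, Integrable (fun ω : Fin n → E => (1 - q (G.nb ω i)) * h ω +
      h ω * ((if j ≠ i ∧ G.adj (ω i) (ω j) then 1 else 0) *
      (q (G.nb ω i) + r * q (G.nb ω i - 1)))) (G.P n) := fun i j => (hS i).add (hJ i j)
  have key : ∀ i : Fin n, ∑ j ∈ Finset.univ.erase i,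
      ((∫ ω, (1 - q (G.nb ω i)) * h ω ∂(G.P n)) + ∫ ω, q (G.nb ω i) *
      ∫ z, G.w (ω i) z * h (Function.update ω j z) ∂G.μ ∂(G.P n)) =
      (n - 1) * (1 + c) * ∫ ω, (if ∃ j, j ≠ i ∧ G.adj (ω i) (ω j) then 1 else 0) * h ω ∂(G.P n) := by
    intro i
    rw [Finset.sum_congr rfl (fun j hj => by
      rw [G.int_move hq i j (Finset.ne_of_mem_erase hj) hh hC, ← integral_add (hS i) (hJ i j)]),
      ← integral_finsetSum _ (fun j _ => hSJ i j), ← integral_const_mul]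
    refine integral_congr_ae (Eventually.of_forall fun ω => ?_)
    beta_reduce
    rw [Finset.sum_add_distrib, Finset.sum_const, nsmul_eq_mul, G.card_erase_r hn,
      ← Finset.mul_sum, ← Finset.sum_mul]
    have hnb : ∑ j ∈ Finset.univ.erase i, (if j ≠ i ∧ G.adj (ω i) (ω j) then (1:ℝ) else 0) =
        G.nb ω i := by
      unfold nb
      rw [← Finset.add_sum_erase _ _ (Finset.mem_univ i)]
      simp
    rw [hnb]
    have h2 := hc (G.nb ω i) (G.nb_le ω i)
    rw [hn1] at h2
    simp only [← G.nb_pos_iff]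
    rw [mul_assoc, ← mul_assoc (1 + c), ← h2]
    field_simp
    ring
  have hW : ∫ ω, G.W ω * h ω ∂(G.P n) =
      ∑ i, ∫ ω, (if ∃ j, j ≠ i ∧ G.adj (ω i) (ω j) then 1 else 0) * h ω ∂(G.P n) := by
    rw [← integral_finsetSum _ (fun i _ => hI i)]
    refine integral_congr_ae (Eventually.of_forall fun ω => ?_)
    beta_reduce
    rw [← Finset.sum_mul]; rfl
  rw [Finset.sum_congr rfl (fun i _ => key i), ← Finset.mul_sum, ← hW]
  field_simp

theorem size_bias {q : ℕ → ℝ} (hq : ∀ k, 0 ≤ q k ∧ q k ≤ 1) (hn : 2 ≤ n) {c : ℝ}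
    (hc : ∀ k, k ≤ n - 1 → 1 - q k + (k / (n - 1 : ℕ) : ℝ) * q k +
      (k / (n - 1 : ℕ) : ℝ) * ((1 - G.p) / G.p) * q (k - 1) = (1 + c) * (if 1 ≤ k then 1 else 0))
    {g : ℝ → ℝ} (hg : Measurable g) {C : ℝ} (hC : ∀ a, |g a| ≤ C) :
    ∫ a, G.W a.1 * g (G.W a.1) ∂(G.Qm n q) =
      (∫ a, G.W a.1 ∂(G.Qm n q)) * ∫ a, g (G.W a.2) ∂(G.Qm n q) := by
  have hC0 : 0 ≤ C := (abs_nonneg _).trans (hC 0)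
  have := G.prob_Q (n := n) hq hn
  rw [G.int_Q_fst hq hn (g := fun ω => G.W ω * g (G.W ω)) (G.meas_W.mul (hg.comp G.meas_W))
    (C := n * C) (fun ω => by
      rw [abs_mul]; exact mul_le_mul (G.abs_W_le _) (hC _) (abs_nonneg _) (by positivity)),
    G.int_Q_fst hq hn (g := fun ω => G.W ω) G.meas_W (G.abs_W_le),
    G.int_Q_snd hq hn hc (h := fun ω => g (G.W ω)) (hg.comp G.meas_W) (fun a => hC _)]
  have h1 := G.int_Q_snd hq hn hc (h := fun ω => 1) measurable_const (C := 1) (by simp)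
  simp only [mul_one, integral_const, probReal_univ, smul_eq_mul] at h1
  rw [← mul_assoc, mul_comm (∫ ω, G.W ω ∂(G.P n)), ← h1, one_mul]

theorem int_dW {q : ℕ → ℝ} (hq : ∀ k, 0 ≤ q k ∧ q k ≤ 1) (hn : 2 ≤ n)
    {s : (Fin n → E) → ℝ} (hs : Measurable s) {C : ℝ} (hC : ∀ a, |s a| ≤ C) :
    ∫ a, s a.1 * (G.W a.2 - G.W a.1) ∂(G.Qm n q) = ∫ a, s a.1 * G.F q a.1 ∂(G.Qm n q) := by
  have hC0 : 0 ≤ C := (abs_nonneg _).trans (hC (fun _ => G.γ))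
  have hF := fun ω : Fin n → E => G.abs_F_le hq ω
  rw [G.int_Q_fst hq hn (g := fun ω => s ω * G.F q ω) (hs.mul G.meas_F) (fun ω => by
      rw [abs_mul]; exact mul_le_mul (hC _) (hF ω) (abs_nonneg _) hC0),
    G.int_Q hq hn (Φ := fun a => s a.1 * (G.W a.2 - G.W a.1))
      ((hs.comp measurable_fst).mul ((G.meas_W.comp measurable_snd).sub
        (G.meas_W.comp measurable_fst))) (C := C * (n + n)) (fun a => by
      rw [abs_mul]
      exact mul_le_mul (hC _) ((abs_sub _ _).trans (add_le_add (G.abs_W_le _) (G.abs_W_le _)))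
        (abs_nonneg _) hC0)]
  simp only [sub_self, mul_zero, integral_zero, zero_add]
  have e : ∀ (i j : Fin n) (ω : Fin n → E), q (G.nb ω i) *
      ∫ z, G.w (ω i) z * (s ω * (G.W (Function.update ω j z) - G.W ω)) ∂G.μ =
      s ω * G.H q ω i j := by
    intro i j ω
    have : ∀ z, G.w (ω i) z * (s ω * (G.W (Function.update ω j z) - G.W ω)) =
        s ω * (G.w (ω i) z * (G.Dl ω j z - G.Dl ω j (ω j))) := by
      intro z
      rw [G.W_upd, G.W_eq ω j]; ring
    simp only [this]
    rw [integral_const_mul]; unfold H; ring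
  simp only [e]
  have hH : ∀ i : Fin n, ∀ j ∈ Finset.univ.erase i, Integrable (fun ω : Fin n → E => s ω * G.H q ω i j) (G.P n) := by
    intro i j hj
    refine intble_bdd _ (hs.mul (G.meas_H i j)) (C := C * (G.K + 1)) fun ω => ?_
    rw [abs_mul]
    refine mul_le_mul (hC _) ?_ (abs_nonneg _) hC0
    have := G.H_bd hq ω i j (Finset.ne_of_mem_erase hj).symm
    exact abs_le.2 ⟨by linarith, this.2⟩
  rw [Finset.sum_congr rfl (fun i _ => (integral_finsetSum _ (fun j hj => hH i j hj)).symm),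
    ← integral_finsetSum _ (fun i _ => integrable_finsetSum _ (fun j hj => hH i j hj)),
    ← integral_const_mul]
  refine integral_congr_ae (Eventually.of_forall fun ω => ?_)
  simp only [F, ← Finset.mul_sum]
  ring

theorem var_Q {q : ℕ → ℝ} (hq : ∀ k, 0 ≤ q k ∧ q k ≤ 1) (hn : 2 ≤ n) :
    variance ((G.Qm n q)[fun a => G.W a.2 - G.W a.1|MeasurableSpace.comap
      (fun a : (Fin n → E) × (Fin n → E) => G.W a.1) Real.measurableSpace]) (G.Qm n q) ≤
      G.tot n / n := by
  have := G.prob_Q (n := n) hq hn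
  have hX : Measurable (fun a : (Fin n → E) × (Fin n → E) => G.W a.1) := G.meas_W.comp measurable_fst
  have hX' : Measurable (fun a : (Fin n → E) × (Fin n → E) => G.W a.2) := G.meas_W.comp measurable_snd
  have hFm : Measurable (fun a : (Fin n → E) × (Fin n → E) => G.F q a.1) :=
    G.meas_F.comp measurable_fst
  have hm := hX.comap_le
  have iD : Integrable (fun a : (Fin n → E) × (Fin n → E) => G.W a.2 - G.W a.1) (G.Qm n q) :=
    intble_bdd _ (hX'.sub hX) (C := n + n) (fun a =>
      (abs_sub _ _).trans (add_le_add (G.abs_W_le _) (G.abs_W_le _)))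
  have iF : Integrable (fun a : (Fin n → E) × (Fin n → E) => G.F q a.1) (G.Qm n q) :=
    intble_bdd _ hFm (fun a => G.abs_F_le hq _)
  set m := MeasurableSpace.comap
      (fun a : (Fin n → E) × (Fin n → E) => G.W a.1) Real.measurableSpace with hmdef
  have hce : (G.Qm n q)[fun a => G.F q a.1|m] =ᵐ[G.Qm n q]
      (G.Qm n q)[fun a => G.W a.2 - G.W a.1|m] := by
    refine ae_eq_condExp_of_forall_setIntegral_eq hm iD (fun s _ _ => integrable_condExp.integrableOn)
      ?_ stronglyMeasurable_condExp.aestronglyMeasurable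
    intro s hs _
    rw [setIntegral_condExp hm iF hs]
    obtain ⟨t, ht, rfl⟩ := hs
    rw [← integral_indicator (hX ht), ← integral_indicator (hX ht)]
    have h := G.int_dW hq hn (s := fun ω : Fin n → E => t.indicator 1 (G.W ω))
      ((measurable_one.indicator ht).comp G.meas_W) (C := 1)
      (fun ω => by by_cases h : G.W ω ∈ t <;> simp [h])
    refine Eq.trans ?_ (h.symm.trans ?_)
    · refine integral_congr_ae (Eventually.of_forall fun a => ?_)
      by_cases h : G.W a.1 ∈ t <;> simp [h, indicator]
    · refine integral_congr_ae (Eventually.of_forall fun a => ?_)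
      by_cases h : G.W a.1 ∈ t <;> simp [h, indicator]
  rw [← variance_congr hce]
  have hL2 : MemLp (fun a : (Fin n → E) × (Fin n → E) => G.F q a.1) 2 (G.Qm n q) :=
    MemLp.of_bound hFm.aestronglyMeasurable _ (Eventually.of_forall fun a => G.abs_F_le hq _)
  have h1 := integral_condVar_add_variance_condExp hm hL2
  have h2 : 0 ≤ ∫ a, Var[fun a : (Fin n → E) × (Fin n → E) => G.F q a.1; G.Qm n q | m] a ∂(G.Qm n q) := by
    refine integral_nonneg_of_ae ?_
    refine condExp_nonneg (Eventually.of_forall fun a => ?_)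
    simp only [Pi.pow_apply, Pi.zero_apply]
    positivity
  refine (by linarith : _ ≤ Var[fun a : (Fin n → E) × (Fin n → E) => G.F q a.1; G.Qm n q]).trans ?_
  rw [variance_eq_sub hL2]
  refine le_trans (le_of_eq ?_) (G.varF hq hn)
  rw [← G.int_Q_fst hq hn (g := fun ω => G.F q ω) G.meas_F (fun ω => G.abs_F_le hq ω),
    ← G.int_Q_fst hq hn (g := fun ω => G.F q ω ^ 2) (G.meas_F.pow_const 2) (C := _) (fun ω => by
      rw [abs_pow]; exact pow_le_pow_left₀ (abs_nonneg _) (G.abs_F_le hq ω) 2)]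
  rfl

theorem main (n : ℕ) (hn : 2 ≤ n) : ∃ (Ω : Type) (_ : MeasurableSpace Ω) (Q : Measure Ω)
    (_ : IsProbabilityMeasure Q) (X X' : Ω → ℝ),
      Measurable X ∧ Measurable X' ∧
      Measure.map X Q = Measure.map (fun ω => G.W ω) (G.P n) ∧
      (∀ g : ℝ → ℝ, Continuous g → (∃ C, ∀ x, |g x| ≤ C) →
        ∫ ω, X ω * g (X ω) ∂Q = (∫ ω, X ω ∂Q) * ∫ ω, g (X' ω) ∂Q) ∧
      (∀ᵐ ω ∂Q, |X' ω - X ω| ≤ (G.K : ℝ) + 1) ∧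
      variance (Q[fun ω => X' ω - X ω|MeasurableSpace.comap X Real.measurableSpace]) Q ≤
        G.tot n / n := by
  have hp0 := G.p0
  have hp1 := G.p1
  obtain ⟨q, c, hq, hc⟩ := exists_pi (n - 1) (by omega) ((1 - G.p) / G.p)
    (div_pos (by linarith) hp0)
  refine ⟨(Fin n → E) × (Fin n → E), inferInstance, G.Qm n q, G.prob_Q hq hn,
    fun a => G.W a.1, fun a => G.W a.2, G.meas_W.comp measurable_fst, G.meas_W.comp measurable_snd,
    ?_, ?_, G.ae_bd hq hn, G.var_Q hq hn⟩
  · rw [← G.map_fst_Q hq hn, Measure.map_map G.meas_W measurable_fst]; rfl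
  · rintro g hg ⟨C, hC⟩
    exact G.size_bias hq hn hc hg.measurable hC

end Geo


namespace Tor
variable {d : ℕ} {L : ℝ}

theorem iInf_eq_abs (hL : 0 < L) (t : ℝ) :
    (⨅ k : ℤ, |t - k * L|) = |t - round (L⁻¹ * t) * L| := by
  apply le_antisymm
  · exact ciInf_le ⟨0, by rintro _ ⟨k, rfl⟩; exact abs_nonneg _⟩ (round (L⁻¹ * t))
  · refine le_ciInf fun k => ?_
    have h := round_le (L⁻¹ * t) k
    have e : ∀ m : ℤ, |t - m * L| = |L⁻¹ * t - m| * L := by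
      intro m
      conv_rhs => rw [← abs_of_pos hL, ← abs_mul]
      congr 1
      rw [abs_of_pos hL]; field_simp
    rw [e, e]
    exact mul_le_mul_of_nonneg_right h hL.le

theorem iInf_eq_norm (hL : 0 < L) (t : ℝ) :
    (⨅ k : ℤ, |t - k * L|) = ‖(t : AddCircle L)‖ := by
  rw [iInf_eq_abs hL, AddCircle.norm_eq]

theorem torDist_eq (hL : 0 < L) (x y : Fin d → ℝ) :
    torDist L x y = Real.sqrt (∑ i, ‖((x i - y i : ℝ) : AddCircle L)‖ ^ 2) := by
  unfold torDist; simp only [iInf_eq_norm hL]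

theorem torDist_symm (hL : 0 < L) (x y : Fin d → ℝ) : torDist L x y = torDist L y x := by
  rw [torDist_eq hL, torDist_eq hL]
  congr 2; ext i
  rw [← norm_neg, ← AddCircle.coe_neg, neg_sub]

theorem sqrt_mono {u v : Fin d → ℝ} (h : ∀ i, |u i| ≤ |v i|) :
    Real.sqrt (∑ i, u i ^ 2) ≤ Real.sqrt (∑ i, v i ^ 2) :=
  Real.sqrt_le_sqrt (Finset.sum_le_sum fun i _ => sq_le_sq.2 (h i))

theorem sqrt_norm (u : Fin d → ℝ) : Real.sqrt (∑ i, u i ^ 2) = ‖WithLp.toLp 2 u‖ := by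
  rw [EuclideanSpace.norm_eq]; simp

theorem torDist_tri (hL : 0 < L) (x y z : Fin d → ℝ) :
    torDist L x z ≤ torDist L x y + torDist L y z := by
  rw [torDist_eq hL, torDist_eq hL, torDist_eq hL]
  refine (sqrt_mono (v := fun i => ‖((x i - y i : ℝ) : AddCircle L)‖ +
    ‖((y i - z i : ℝ) : AddCircle L)‖) fun i => ?_).trans ?_
  · rw [abs_of_nonneg (norm_nonneg _), abs_of_nonneg (by positivity)]
    have : ((x i - z i : ℝ) : AddCircle L) = ((x i - y i : ℝ) : AddCircle L) +
      ((y i - z i : ℝ) : AddCircle L) := by rw [← AddCircle.coe_add]; congr 1; ring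
    rw [this]; exact norm_add_le _ _
  · rw [sqrt_norm, sqrt_norm, sqrt_norm]
    exact norm_add_le (WithLp.toLp 2 fun i => ‖((x i - y i : ℝ) : AddCircle L)‖)
      (WithLp.toLp 2 fun i => ‖((y i - z i : ℝ) : AddCircle L)‖)

theorem torDist_self (hL : 0 < L) (x : Fin d → ℝ) : torDist L x x = 0 := by
  rw [torDist_eq hL]; simp

theorem cont_torDist (hL : 0 < L) :
    Continuous (fun q : (Fin d → ℝ) × (Fin d → ℝ) => torDist L q.1 q.2) := by
  simp only [torDist_eq hL]
  refine Real.continuous_sqrt.comp (continuous_finsetSum _ fun i _ => ?_)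
  refine Continuous.pow (Continuous.norm ?_) 2
  exact (AddCircle.continuous_mk' L).comp (by fun_prop)

theorem ms_box : MeasurableSet (box d L) := MeasurableSet.univ_pi fun _ => measurableSet_Ico

/-- reference ball -/
def refBall (d : ℕ) (L r : ℝ) : Set (Fin d → ℝ) :=
  {y | Real.sqrt (∑ i, y i ^ 2) ≤ r} ∩ univ.pi fun _ => Ioc (-(L/2)) (L/2)

theorem pi_box (a : Fin d → ℝ) (hL : 0 < L) {S : Set (Fin d → AddCircle L)} (hS : MeasurableSet S) :
    volume (((fun (y : Fin d → ℝ) i => ((y i : ℝ) : AddCircle L)) ⁻¹' S) ∩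
      univ.pi fun i => Ioc (a i) (a i + L)) =
      haveI : Fact (0 < L) := ⟨hL⟩; (Measure.pi fun _ : Fin d => (volume : Measure (AddCircle L))) S := by
  haveI : Fact (0 < L) := ⟨hL⟩
  have h := measurePreserving_pi (fun i : Fin d => volume.restrict (Ioc (a i) (a i + L)))
    (fun _ => (volume : Measure (AddCircle L))) (f := fun i t => (t : AddCircle L))
    (fun i => AddCircle.measurePreserving_mk L (a i))
  rw [← h.measure_preimage hS.nullMeasurableSet, ← Measure.restrict_pi_pi,
    Measure.restrict_apply (h.measurable hS)]
  rfl

theorem vol_ball (hL : 0 < L) (x : Fin d → ℝ) (r : ℝ) :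
    volume (torBall L x r) = volume (refBall d L r) := by
  haveI : Fact (0 < L) := ⟨hL⟩
  set S : Set (Fin d → AddCircle L) :=
    {θ | Real.sqrt (∑ i, ‖((x i : ℝ) : AddCircle L) - θ i‖ ^ 2) ≤ r} with hSdef
  have hS : MeasurableSet S := by
    refine (isClosed_le ?_ continuous_const).measurableSet
    fun_prop
  have hpre : (fun (y : Fin d → ℝ) i => ((y i : ℝ) : AddCircle L)) ⁻¹' S =
      {y | torDist L x y ≤ r} := by
    ext y; simp only [hSdef, mem_preimage, mem_ofPred_eq, torDist_eq hL, AddCircle.coe_sub]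
  have h1 := pi_box (fun _ : Fin d => (0:ℝ)) hL hS
  have h2 := pi_box (fun i : Fin d => x i - L / 2) hL hS
  rw [← h2, hpre] at h1
  have e1 : volume (torBall L x r) = volume ({y : Fin d → ℝ | torDist L x y ≤ r} ∩
      univ.pi fun _ => Ioc (0:ℝ) (0 + L)) := by
    have : torBall L x r = {y : Fin d → ℝ | torDist L x y ≤ r} ∩ univ.pi fun _ => Ico (0:ℝ) L := by
      ext y; simp only [torBall, box, mem_inter_iff, mem_ofPred_eq]; tauto
    rw [this, zero_add]
    refine measure_congr (EventuallyEq.inter (ae_eq_refl _) ?_)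
    exact (Measure.univ_pi_Ico_ae_eq_Icc (f := fun _ : Fin d => (0:ℝ)) (g := fun _ => L)).trans
      (Measure.univ_pi_Ioc_ae_eq_Icc (f := fun _ : Fin d => (0:ℝ)) (g := fun _ => L)).symm
  rw [e1, h1, ← measure_preimage_add volume x]
  congr 1
  ext y
  simp only [refBall, mem_preimage, mem_inter_iff, mem_ofPred_eq, Set.mem_pi, mem_univ, true_imp_iff,
    Pi.add_apply, mem_Ioc]
  have hb : (∀ i, x i - L / 2 < x i + y i ∧ x i + y i ≤ x i - L / 2 + L) ↔
      ∀ i, -(L/2) < y i ∧ y i ≤ L / 2 :=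
    forall_congr' fun i => ⟨fun h => ⟨by linarith, by linarith⟩, fun h => ⟨by linarith, by linarith⟩⟩
  rw [hb]
  refine and_congr_left fun h => ?_
  rw [torDist_eq hL]
  have : ∀ i, ‖((x i - (x + y) i : ℝ) : AddCircle L)‖ = |y i| := by
    intro i
    have : x i - (x + y) i = - y i := by simp
    rw [this, AddCircle.coe_neg, norm_neg, (AddCircle.norm_coe_eq_abs_iff L hL.ne'),
      abs_of_pos hL, abs_le]
    exact ⟨(h i).1.le, (h i).2⟩
  simp only [this, sq_abs]

theorem vol_ref_le (r : ℝ) (hr : 0 ≤ r) :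
    volume (refBall d L r) ≤ ENNReal.ofReal (r ^ d * unitBallVol d) := by
  refine (measure_mono inter_subset_left).trans (le_of_eq ?_)
  have h1 : {y : Fin d → ℝ | Real.sqrt (∑ i, y i ^ 2) ≤ r} =
      (WithLp.toLp 2) ⁻¹' (closedBall (0 : EuclideanSpace ℝ (Fin d)) r) := by
    ext y; simp only [mem_preimage, mem_closedBall_zero_iff, mem_ofPred_eq, sqrt_norm]
  rw [h1, (PiLp.volume_preserving_toLp (Fin d)).measure_preimage
    measurableSet_closedBall.nullMeasurableSet, Measure.addHaar_closedBall _ _ hr]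
  have h2 : volume (closedBall (0 : EuclideanSpace ℝ (Fin d)) 1) =
      volume (ball (0 : EuclideanSpace ℝ (Fin d)) 1) := by
    rw [Measure.addHaar_closedBall _ _ zero_le_one]; simp
  rw [unitBallVol, h2, ENNReal.ofReal_mul (by positivity), ENNReal.ofReal_toReal measure_ball_lt_top.ne]
  simp

theorem vol_ref_pos (hL : 0 < L) (r : ℝ) (hr : 0 < r) : 0 < volume (refBall d L r) := by
  have hU : IsOpen ({y : Fin d → ℝ | Real.sqrt (∑ i, y i ^ 2) < r} ∩
      univ.pi fun _ => Ioo (-(L/2)) (L/2)) := by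
    refine IsOpen.inter (isOpen_lt (by fun_prop) continuous_const)
      (isOpen_set_pi finite_univ fun _ _ => isOpen_Ioo)
  refine (hU.measure_pos volume ⟨0, ?_⟩).trans_le (measure_mono ?_)
  · refine ⟨by simpa using hr, fun i _ => ?_⟩
    simp only [Pi.zero_apply, mem_Ioo]; constructor <;> linarith
  · rintro y ⟨h1, h2⟩
    have h1' : Real.sqrt (∑ i, y i ^ 2) < r := h1
    exact ⟨(h1'.le : Real.sqrt (∑ i, y i ^ 2) ≤ r), fun i hi => Ioo_subset_Ioc_self (h2 i hi)⟩

theorem unitBallVol_nonneg : 0 ≤ unitBallVol d := ENNReal.toReal_nonneg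

theorem phi_nonneg {ρ : ℝ} (hρ : 0 < ρ) : 0 ≤ phi d ρ :=
  mul_nonneg unitBallVol_nonneg (by positivity)

/-! packing -/

theorem kappa_bdd (d : ℕ) : BddAbove {k : ℕ | ∃ c : Fin k → EuclideanSpace ℝ (Fin d),
    (∀ i, (Metric.closedBall (c i) 1 ∩ Metric.closedBall 0 1).Nonempty) ∧
    Pairwise fun i j => Disjoint (Metric.closedBall (c i) 1) (Metric.closedBall (c j) 1)} := by
  refine ⟨3 ^ d, ?_⟩
  rintro k ⟨c, h1, h2⟩
  have hsub : (⋃ i, closedBall (c i) 1) ⊆ closedBall (0 : EuclideanSpace ℝ (Fin d)) 3 := by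
    refine iUnion_subset fun i => ?_
    obtain ⟨w, hw1, hw2⟩ := h1 i
    refine closedBall_subset_closedBall' ?_
    have := dist_triangle (c i) w 0
    rw [mem_closedBall] at hw1 hw2
    rw [dist_comm] at hw1
    linarith
  have hm := measure_mono (μ := volume) hsub
  rw [measure_iUnion h2 (fun i => measurableSet_closedBall)] at hm
  simp only [Measure.addHaar_closedBall _ _ zero_le_one,
    Measure.addHaar_closedBall _ _ (by norm_num : (0:ℝ) ≤ 3)] at hm
  have hv : volume (ball (0 : EuclideanSpace ℝ (Fin d)) 1) ≠ 0 := (measure_ball_pos _ _ one_pos).ne'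
  have hv' : volume (ball (0 : EuclideanSpace ℝ (Fin d)) 1) ≠ ∞ := measure_ball_lt_top.ne
  simp only [one_pow, ENNReal.ofReal_one, one_mul, tsum_fintype, Finset.sum_const, Finset.card_univ,
    Fintype.card_fin, nsmul_eq_mul, finrank_euclideanSpace] at hm
  rw [ENNReal.mul_le_mul_iff_left hv hv'] at hm
  have : ENNReal.ofReal ((3:ℝ) ^ d) = ((3 ^ d : ℕ) : ℝ≥0∞) := by
    rw [← ENNReal.ofReal_natCast]; push_cast; rfl
  rw [this] at hm
  exact_mod_cast hm

theorem le_kappa {k : ℕ} (c : Fin k → EuclideanSpace ℝ (Fin d)) (h1 : ∀ i, ‖c i‖ ≤ 2)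
    (h2 : ∀ i j, i ≠ j → 2 < dist (c i) (c j)) : k ≤ kappa d := by
  refine le_csSup (kappa_bdd d) ⟨c, fun i => ⟨(2:ℝ)⁻¹ • c i, ?_, ?_⟩, fun i j hij => ?_⟩
  · rw [mem_closedBall, dist_eq_norm]
    have : (2:ℝ)⁻¹ • c i - c i = (-(2:ℝ)⁻¹) • c i := by
      rw [neg_smul, sub_eq_iff_eq_add, neg_add_eq_sub, eq_sub_iff_add_eq, ← add_smul]; norm_num
    rw [this, norm_smul]
    have := h1 i
    rw [Real.norm_eq_abs, abs_neg, abs_of_pos (by norm_num)]; linarith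
  · rw [mem_closedBall_zero_iff, norm_smul, Real.norm_eq_abs, abs_of_pos (by norm_num)]
    have := h1 i
    linarith
  · exact closedBall_disjoint_closedBall (by have := h2 i j hij; linarith)

theorem two_le_kappa (hd : 1 ≤ d) : 2 ≤ kappa d := by
  set e : EuclideanSpace ℝ (Fin d) := EuclideanSpace.single (⟨0, by omega⟩ : Fin d) (1:ℝ) with he
  have hn : ‖e‖ = 1 := by simp [he]
  refine le_kappa (fun i : Fin 2 => (if i = 0 then (2:ℝ) else -2) • e) (fun i => ?_) (fun i j hij => ?_)
  · rw [norm_smul, hn]; split_ifs <;> norm_num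
  · rw [dist_eq_norm, ← sub_smul, norm_smul, hn]
    fin_cases i <;> fin_cases j <;> simp at hij ⊢ <;> norm_num

theorem pack_tor (hL : 0 < L) {ρ : ℝ} (hρ : 0 < ρ) (n : ℕ) (ω : Fin n → Fin d → ℝ) (z : Fin d → ℝ)
    (s : Finset (Fin n)) (h1 : ∀ l ∈ s, torDist L z (ω l) ≤ ρ)
    (h2 : ∀ l ∈ s, ∀ l' ∈ s, l ≠ l' → ρ < torDist L (ω l) (ω l')) : s.card ≤ kappa d := by
  set u : Fin n → Fin d → ℝ := fun l i =>
    (ω l i - z i) - round (L⁻¹ * (ω l i - z i)) * L with hu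
  have hn1 : ∀ l ∈ s, ‖WithLp.toLp 2 (u l)‖ ≤ ρ := by
    intro l hl
    rw [← sqrt_norm]
    refine le_trans (le_of_eq ?_) (h1 l hl)
    rw [torDist_symm hL, torDist_eq hL]
    simp only [AddCircle.norm_eq, sq_abs, hu]
  have hn2 : ∀ l l', torDist L (ω l) (ω l') ≤ ‖WithLp.toLp 2 (u l) - WithLp.toLp 2 (u l')‖ := by
    intro l l'
    rw [← WithLp.toLp_sub, ← sqrt_norm, torDist_eq hL]
    refine sqrt_mono fun i => ?_
    rw [abs_of_nonneg (norm_nonneg _)]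
    have : ((ω l i - ω l' i : ℝ) : AddCircle L) = (((u l - u l') i : ℝ) : AddCircle L) := by
      have e : ω l i - ω l' i = (u l - u l') i +
        ((round (L⁻¹ * (ω l i - z i)) - round (L⁻¹ * (ω l' i - z i)) : ℤ) : ℝ) * L := by
        simp only [hu, Pi.sub_apply]; push_cast; ring
      have hk : ∀ m : ℤ, (((m : ℝ) * L : ℝ) : AddCircle L) = 0 := by
        intro m
        rw [← zsmul_eq_mul, AddCircle.coe_zsmul, AddCircle.coe_period, smul_zero]
      rw [e, AddCircle.coe_add, hk, add_zero]
    rw [this, ← iInf_eq_norm hL]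
    refine (ciInf_le ⟨0, by rintro _ ⟨k, rfl⟩; exact abs_nonneg _⟩ (0:ℤ)).trans ?_
    simp
  refine le_kappa (fun a : Fin s.card => (2 / ρ) • WithLp.toLp 2 (u (s.equivFin.symm a))) ?_ ?_
  · intro a
    have := hn1 _ (s.equivFin.symm a).2
    rw [norm_smul, Real.norm_eq_abs, abs_of_pos (by positivity), div_mul_eq_mul_div, div_le_iff₀ hρ]
    linarith
  · intro a b hab
    have hne : (s.equivFin.symm a : Fin n) ≠ s.equivFin.symm b := by
      intro h; exact hab (s.equivFin.symm.injective (Subtype.ext h))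
    have h3 := (h2 _ (s.equivFin.symm a).2 _ (s.equivFin.symm b).2 hne).trans_le (hn2 _ _)
    rw [dist_eq_norm, ← smul_sub, norm_smul, Real.norm_eq_abs, abs_of_pos (by positivity),
      div_mul_eq_mul_div, lt_div_iff₀ hρ]
    linarith

end Tor

namespace Tor

theorem sideLen_pos {d n : ℕ} (hn : 4 ≤ n) : 0 < sideLen d n :=
  Real.rpow_pos_of_pos (by exact_mod_cast (by omega : 0 < n)) _

theorem sideLen_pow {d n : ℕ} (hd : 1 ≤ d) : sideLen d n ^ d = n := by
  unfold sideLen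
  rw [← Real.rpow_natCast, ← Real.rpow_mul (by positivity), inv_mul_cancel₀, Real.rpow_one]
  exact_mod_cast (by omega : d ≠ 0)

theorem vol_box {d : ℕ} {L : ℝ} : volume (box d L) = ENNReal.ofReal L ^ d := by
  unfold box
  rw [volume_pi_pi]; simp

theorem unif_apply {d n : ℕ} (hd : 1 ≤ d) (hn : 4 ≤ n) {s : Set (Fin d → ℝ)}
    (hs : MeasurableSet s) :
    (uniformBox d (sideLen d n)).real s = (volume (s ∩ box d (sideLen d n))).toReal / n := by
  unfold uniformBox
  have hL := sideLen_pos (d := d) hn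
  rw [measureReal_nnreal_smul_apply, measureReal_def, Measure.restrict_apply hs]
  push_cast
  rw [Real.coe_toNNReal _ hL.le, sideLen_pow hd]
  field_simp

theorem unif_prob {d n : ℕ} (hd : 1 ≤ d) (hn : 4 ≤ n) :
    IsProbabilityMeasure (uniformBox d (sideLen d n)) := by
  have hn0 : (n:ℝ) ≠ 0 := by exact_mod_cast (by omega : n ≠ 0)
  have hL := sideLen_pos (d := d) hn
  have h := unif_apply hd hn (s := univ) MeasurableSet.univ
  rw [univ_inter, vol_box, ENNReal.toReal_pow, ENNReal.toReal_ofReal hL.le, sideLen_pow hd,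
    div_self hn0, measureReal_def, ENNReal.toReal_eq_one_iff] at h
  exact ⟨h⟩

theorem ms_rel {d : ℕ} {L : ℝ} (hL : 0 < L) (r : ℝ) : MeasurableSet
    {q : (Fin d → ℝ) × (Fin d → ℝ) | q.1 ∈ box d L ∧ q.2 ∈ box d L ∧ torDist L q.1 q.2 ≤ r} :=
  (measurable_fst ms_box).inter ((measurable_snd ms_box).inter
    (isClosed_le (cont_torDist hL) continuous_const).measurableSet)

theorem rel_sec {d n : ℕ} (hd : 1 ≤ d) (hn : 4 ≤ n) (r : ℝ) (x : Fin d → ℝ)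
    (hx : x ∈ box d (sideLen d n)) :
    (uniformBox d (sideLen d n)).real {z | x ∈ box d (sideLen d n) ∧ z ∈ box d (sideLen d n) ∧
      torDist (sideLen d n) x z ≤ r} = (volume (refBall d (sideLen d n) r)).toReal / n := by
  have hL := sideLen_pos (d := d) hn
  have hm : MeasurableSet {z | x ∈ box d (sideLen d n) ∧ z ∈ box d (sideLen d n) ∧
      torDist (sideLen d n) x z ≤ r} :=
    (measurable_const.prodMk measurable_id : Measurable fun z : Fin d → ℝ => (x, z)) (ms_rel hL r)
  rw [unif_apply hd hn hm, ← vol_ball hL x r]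
  congr 3
  ext z; simp only [torBall, mem_inter_iff, mem_ofPred_eq]; tauto

theorem rel_sec_le {d n : ℕ} (hd : 1 ≤ d) (hn : 4 ≤ n) (r : ℝ) (x : Fin d → ℝ) :
    (uniformBox d (sideLen d n)).real {z | x ∈ box d (sideLen d n) ∧ z ∈ box d (sideLen d n) ∧
      torDist (sideLen d n) x z ≤ r} ≤ (volume (refBall d (sideLen d n) r)).toReal / n := by
  by_cases hx : x ∈ box d (sideLen d n)
  · exact (rel_sec hd hn r x hx).le
  · simp [hx]; positivity

theorem ref_le {d n : ℕ} (c ρ : ℝ) (hc : 0 ≤ c) (hρ : 0 < ρ) :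
    (volume (refBall d (sideLen d n) (c * ρ))).toReal / n ≤ c ^ d * phi d ρ / n := by
  have h := vol_ref_le (d := d) (L := sideLen d n) (c * ρ) (by positivity)
  have h2 := ENNReal.toReal_mono ENNReal.ofReal_ne_top h
  rw [ENNReal.toReal_ofReal (mul_nonneg (by positivity) unitBallVol_nonneg), mul_pow] at h2
  have : c ^ d * phi d ρ = c ^ d * ρ ^ d * unitBallVol d := by unfold phi; ring
  rw [this]
  gcongr

/-- the geometric data -/
def geo (d n : ℕ) (hd : 1 ≤ d) (hn : 4 ≤ n) (ρ : ℝ) (hρ : 0 < ρ) (hphi : 3 ^ d * phi d ρ < n) :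
    Geo (Fin d → ℝ) where
  μ := uniformBox d (sideLen d n)
  prob := unif_prob hd hn
  adj x y := x ∈ box d (sideLen d n) ∧ y ∈ box d (sideLen d n) ∧ torDist (sideLen d n) x y ≤ ρ
  adj2 x y := x ∈ box d (sideLen d n) ∧ y ∈ box d (sideLen d n) ∧ torDist (sideLen d n) x y ≤ 2 * ρ
  adj3 x y := x ∈ box d (sideLen d n) ∧ y ∈ box d (sideLen d n) ∧ torDist (sideLen d n) x y ≤ 3 * ρ
  symm x y h := ⟨h.2.1, h.1, by rw [torDist_symm (sideLen_pos hn)]; exact h.2.2⟩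
  m1 := ms_rel (sideLen_pos hn) _
  m2 := ms_rel (sideLen_pos hn) _
  m3 := ms_rel (sideLen_pos hn) _
  a12 x y h := ⟨h.1, h.2.1, by have := h.2.2; linarith⟩
  a13 x y h := ⟨h.1, h.2.1, by have := h.2.2; linarith⟩
  a112 x y z h h' := ⟨h.1, h'.2.1, by
    have := torDist_tri (sideLen_pos (d := d) hn) x y z
    have := h.2.2; have := h'.2.2; linarith⟩
  a123 x y z h h' := ⟨h.1, h'.2.1, by
    have := torDist_tri (sideLen_pos (d := d) hn) x y z
    have := h.2.2; have := h'.2.2; linarith⟩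
  γ := fun _ => -1
  hγ x h := by
    have := h.1 ⟨0, by omega⟩ (mem_univ _)
    simp at this
    linarith [this.1]
  p := (volume (refBall d (sideLen d n) ρ)).toReal / n
  p0 := by
    have hn0 : (0:ℝ) < n := by exact_mod_cast (by omega : 0 < n)
    refine div_pos (ENNReal.toReal_pos (vol_ref_pos (sideLen_pos hn) ρ hρ).ne' ?_) hn0
    exact (lt_of_le_of_lt (vol_ref_le ρ hρ.le) ENNReal.ofReal_lt_top).ne
  p1 := by
    have hn0 : (0:ℝ) < n := by exact_mod_cast (by omega : 0 < n)
    have h := ref_le (d := d) (n := n) 1 ρ zero_le_one hρ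
    rw [one_mul, one_pow, one_mul] at h
    refine h.trans_lt ?_
    rw [div_lt_one hn0]
    have h3 : (1:ℝ) ≤ 3 ^ d := one_le_pow₀ (by norm_num)
    have := phi_nonneg (d := d) hρ
    nlinarith
  hp x := rel_sec_le hd hn ρ x
  hpe := by
    have : ∀ᵐ x ∂(uniformBox d (sideLen d n)), x ∈ box d (sideLen d n) := by
      unfold uniformBox
      exact (Measure.ae_smul_measure (ae_restrict_mem ms_box) _)
    filter_upwards [this] with x hx
    exact rel_sec hd hn ρ x hx
  p2 := 2 ^ d * phi d ρ / n
  p3 := 3 ^ d * phi d ρ / n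
  hp2 y := by
    refine le_trans (le_of_eq ?_) ((rel_sec_le hd hn (2 * ρ) y).trans (ref_le 2 ρ (by norm_num) hρ))
    congr 1; ext x
    simp only [mem_ofPred_eq, torDist_symm (sideLen_pos (d := d) hn) x y]; tauto
  hp3 y := by
    refine le_trans (le_of_eq ?_) ((rel_sec_le hd hn (3 * ρ) y).trans (ref_le 3 ρ (by norm_num) hρ))
    congr 1; ext x
    simp only [mem_ofPred_eq, torDist_symm (sideLen_pos (d := d) hn) x y]; tauto
  K := kappa d
  pack m ω z s h1 h2 := by
    refine pack_tor (sideLen_pos (d := d) hn) hρ m ω z s (fun l hl => (h1 l hl).2.2) ?_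
    intro l hl l' hl' hne
    have := h2 l hl l' hl' hne
    by_contra hcon
    exact this ⟨(h1 l hl).2.1, (h1 l' hl').2.1, not_lt.1 hcon⟩

theorem unif_single {d n : ℕ} (hd : 1 ≤ d) (y : Fin d → ℝ) :
    uniformBox d (sideLen d n) {y} = 0 := by
  unfold uniformBox
  rw [Measure.smul_apply, Measure.restrict_apply (measurableSet_singleton y)]
  have : volume ({y} : Set (Fin d → ℝ)) = 0 := by
    have : Nonempty (Fin d) := ⟨⟨0, by omega⟩⟩
    rw [← Set.univ_pi_singleton, volume_pi_pi]
    simp; omega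
  rw [measure_mono_null inter_subset_left this]; simp

theorem ae_inj {d n : ℕ} (hd : 1 ≤ d) (hn : 4 ≤ n) :
    ∀ᵐ ω ∂(binppLaw d n), ∀ i j, i ≠ j → ω i ≠ ω j := by
  have := unif_prob hd hn
  rw [ae_all_iff]; intro i
  rw [ae_all_iff]; intro j
  by_cases hij : i = j
  · simp [hij]
  have hpi : Measurable (fun ω : Fin n → Fin d → ℝ => ω i) := measurable_pi_apply i
  have hpj : Measurable (fun ω : Fin n → Fin d → ℝ => ω j) := measurable_pi_apply j
  have hms : MeasurableSet {ω : Fin n → Fin d → ℝ | ω i = ω j} := measurableSet_eq_fun hpi hpj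
  have : binppLaw d n {ω : Fin n → Fin d → ℝ | ω i = ω j} = 0 := by
    unfold binppLaw
    have hmp := upd_mp (uniformBox d (sideLen d n)) i
    rw [← hmp.measure_preimage hms.nullMeasurableSet]
    rw [Measure.measure_prod_null (hmp.measurable hms)]
    refine Eventually.of_forall fun ω => ?_
    refine measure_mono_null ?_ (unif_single hd (ω j))
    intro x hx
    simp only [mem_preimage, mem_ofPred_eq, Function.update_self,
      Function.update_of_ne (Ne.symm hij)] at hx
    exact hx
  have h2 : ∀ᵐ ω ∂(binppLaw d n), ¬ (ω i = ω j) := by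
    rw [ae_iff]; simpa using this
  filter_upwards [h2] with ω hω _
  exact hω

theorem ae_box {d n : ℕ} (hd : 1 ≤ d) (hn : 4 ≤ n) :
    ∀ᵐ ω ∂(binppLaw d n), ∀ i, ω i ∈ box d (sideLen d n) := by
  have := unif_prob hd hn
  rw [ae_all_iff]; intro i
  have : ∀ᵐ x ∂(uniformBox d (sideLen d n)), x ∈ box d (sideLen d n) := by
    unfold uniformBox
    exact (Measure.ae_smul_measure (ae_restrict_mem ms_box) _)
  exact (measurePreserving_eval (fun _ : Fin n => uniformBox d (sideLen d n)) i).quasiMeasurePreserving.ae this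

theorem W_ae (d n : ℕ) (hd : 1 ≤ d) (hn : 4 ≤ n) (ρ : ℝ) (hρ : 0 < ρ) (hphi : 3 ^ d * phi d ρ < n) :
    (fun ω => (geo d n hd hn ρ hρ hphi).W ω) =ᵐ[binppLaw d n]
      (fun ω => (n : ℝ) - isolCount d n ρ ω) := by
  filter_upwards [ae_inj hd hn, ae_box hd hn] with ω h1 h2
  have hL := sideLen_pos (d := d) hn
  unfold Geo.W isolCount
  have : (n : ℝ) = ∑ i : Fin n, (1:ℝ) := by simp
  rw [this, ← Finset.sum_sub_distrib]
  refine Finset.sum_congr rfl fun i _ => ?_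
  have key : (Set.range ω ∩ torBall (sideLen d n) (ω i) ρ = {ω i}) ↔
      ¬ ∃ j, j ≠ i ∧ (geo d n hd hn ρ hρ hphi).adj (ω i) (ω j) := by
    constructor
    · rintro h ⟨j, hj, hadj⟩
      have : ω j ∈ Set.range ω ∩ torBall (sideLen d n) (ω i) ρ := ⟨⟨j, rfl⟩, hadj.2.1, hadj.2.2⟩
      rw [h] at this
      exact h1 j i hj this
    · intro h
      ext x
      simp only [mem_inter_iff, mem_singleton_iff]
      constructor
      · rintro ⟨⟨j, rfl⟩, hb⟩
        by_contra hne
        exact h ⟨j, fun e => hne (by rw [e]), h2 i, hb.1, hb.2⟩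
      · rintro rfl
        exact ⟨⟨i, rfl⟩, h2 i, by rw [torDist_self hL]; exact hρ.le⟩
  by_cases h : ∃ j, j ≠ i ∧ (geo d n hd hn ρ hρ hphi).adj (ω i) (ω j)
  · rw [if_pos h, if_neg (by rw [key]; simpa using h)]; simp
  · rw [if_neg h, if_pos (key.2 h)]; simp

theorem final_ineq (d n : ℕ) (hd : 1 ≤ d) (hn : 4 ≤ n) (ρ : ℝ) (hρ : 0 < ρ)
    (hphi : 3 ^ d * phi d ρ < n) (hphi2 : (2 ^ (d + 1) + 1) * phi d ρ < n) :
    (geo d n hd hn ρ hρ hphi).tot n ≤ etaS d n ρ := by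
  have hn0 : (0:ℝ) < n := by exact_mod_cast (by omega : 0 < n)
  have hn4 : (4:ℝ) ≤ n := by exact_mod_cast hn
  have hK : (2:ℝ) ≤ kappa d := by exact_mod_cast two_le_kappa hd
  have hphi0 := phi_nonneg (d := d) hρ
  have e : (geo d n hd hn ρ hρ hphi).tot n = (2 * ((kappa d : ℝ) + 1)) ^ 2 +
      2 * (2 * ((kappa d : ℝ) + 1)) * ((2 * (kappa d : ℝ) + 1) * (3 ^ d * phi d ρ) +
        ((kappa d : ℝ) + 1) * (2 ^ d * phi d ρ)) +
      ((2 * (kappa d : ℝ) + 1) ^ 2 * (3 ^ d * phi d ρ) +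
  (((kappa d : ℝ) + 1) ^ 2 + 2 * (2 * (kappa d : ℝ) + 1) * ((kappa d : ℝ) + 1)) * (2 ^ d * phi d ρ)) +
      ((2 * (kappa d : ℝ) + 1) * (3 ^ d * phi d ρ) +
        ((kappa d : ℝ) + 1) * (2 ^ d * phi d ρ)) ^ 2 := by
    unfold Geo.tot Geo.bb Geo.cc geo
    simp only
    field_simp
  rw [e]
  have hfrac : ∀ x : ℝ, 0 ≤ x → x < n → 2 ≤ (2 * n - x) / (n - x) := by
    intro x h0 h1
    rw [le_div_iff₀ (by linarith)]; linarith
  have h2d : (2:ℝ) ≤ 2 ^ d := by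
    calc (2:ℝ) = 2 ^ 1 := by norm_num
      _ ≤ 2 ^ d := pow_le_pow_right₀ (by norm_num) hd
  have h32 : (3:ℝ) * 2 ^ d ≤ 2 * 3 ^ d := by
    obtain ⟨m, rfl⟩ : ∃ m, d = m + 1 := ⟨d - 1, by omega⟩
    have : (2:ℝ) ^ m ≤ 3 ^ m := pow_le_pow_left₀ (by norm_num) (by norm_num) m
    rw [pow_succ, pow_succ]; linarith
  have f1 := hfrac (3 ^ d * phi d ρ) (by positivity) hphi
  have f2 := hfrac ((2 ^ (d + 1) + 1) * phi d ρ) (by positivity) hphi2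
  have h9 : (9:ℝ) ^ d = 3 ^ d * 3 ^ d := by rw [← mul_pow]; norm_num
  have second : 0 ≤ (((1 : ℝ) + kappa d) ^ 2 / 2) *
      ((2 ^ d + 2 * 3 ^ d + 3) * phi d ρ +
        (2 ^ (d + 1) + 1) *
          ((2 * n - (2 ^ (d + 1) + 1) * phi d ρ) / (n - (2 ^ (d + 1) + 1) * phi d ρ)) *
          phi d ρ ^ 2 +
        (4 * n - 2) / (n - 1)) := by
    have g1 : (0:ℝ) ≤ (4 * n - 2) / (n - 1) := div_nonneg (by linarith) (by linarith)
    have g2 : 0 ≤ (2 * n - (2 ^ (d + 1) + 1) * phi d ρ) / (n - (2 ^ (d + 1) + 1) * phi d ρ) := by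
      linarith
    positivity
  unfold etaS
  refine le_trans ?_ (le_add_of_nonneg_right second)
  set t := 3 ^ d * phi d ρ with ht
  set s := 2 ^ d * phi d ρ with hs
  have ht0 : 0 ≤ t := by positivity
  have hs0 : 0 ≤ s := by positivity
  have hst : 3 * s ≤ 2 * t := by
    rw [hs, ht, ← mul_assoc, ← mul_assoc]; exact mul_le_mul_of_nonneg_right h32 hphi0
  have hmain : 2 * (1 + 2 * (kappa d : ℝ)) ^ 2 * (1 + 3 * t + 2 * t ^ 2) ≤
      2 * (1 + 2 * (kappa d : ℝ)) ^ 2 *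
      (1 + (2 ^ d + 1) * 3 ^ d * phi d ρ + (2 * n - t) / (n - t) * 9 ^ d * phi d ρ ^ 2) := by
    have a1 : 3 * t ≤ (2 ^ d + 1) * 3 ^ d * phi d ρ := by
      rw [mul_assoc, ← ht]; exact mul_le_mul_of_nonneg_right (by linarith) ht0
    have a2 : 2 * t ^ 2 ≤ (2 * n - t) / (n - t) * 9 ^ d * phi d ρ ^ 2 := by
      have : (2 * n - t) / (n - t) * 9 ^ d * phi d ρ ^ 2 = (2 * n - t) / (n - t) * t ^ 2 := by
        rw [h9, ht]; ring
      rw [this]; exact mul_le_mul_of_nonneg_right f1 (by positivity)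
    have : 0 ≤ 2 * (1 + 2 * (kappa d : ℝ)) ^ 2 := by positivity
    exact mul_le_mul_of_nonneg_left (by linarith) this
  refine le_trans ?_ hmain
  clear_value t s
  generalize (kappa d : ℝ) = k at *
  set m := 2 * k + 1 with hm
  set b := k + 1 with hb
  have hm' : 1 + 2 * k = m := by rw [hm]; ring
  rw [hm']
  have hbm : 5 * b ≤ 3 * m := by rw [hb, hm]; linarith
  have hb0 : 0 ≤ b := by rw [hb]; linarith
  have hm0 : 0 ≤ m := by rw [hm]; linarith
  clear_value m b
  have q1 : b * s ≤ 2 / 5 * (m * t) := by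
    have := mul_le_mul (show b ≤ 3/5 * m by linarith) (show s ≤ 2/3 * t by linarith) hs0 (by positivity)
    linarith
  have q2 : b * b ≤ 9/25 * (m * m) := by
    have := mul_le_mul (show b ≤ 3/5 * m by linarith) (show b ≤ 3/5 * m by linarith) hb0 (by positivity)
    linarith
  have hmt : 0 ≤ m * t := by positivity
  have hB : m * t + b * s ≤ 7/5 * (m * t) := by linarith
  have hB0 : 0 ≤ m * t + b * s := by positivity
  have q3 : (m * t + b * s) ^ 2 ≤ (7/5 * (m * t)) ^ 2 := pow_le_pow_left₀ hB0 hB 2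
  have q4 : b * (m * t + b * s) ≤ (3/5 * m) * (7/5 * (m * t)) :=
    mul_le_mul (by linarith) hB hB0 (by positivity)
  have q5 : b * (b * s) ≤ (3/5 * m) * (2/5 * (m * t)) :=
    mul_le_mul (by linarith) q1 (by positivity) (by positivity)
  have q6 : m * (b * s) ≤ m * (2/5 * (m * t)) := mul_le_mul_of_nonneg_left q1 hm0
  have p1 : 0 ≤ m * m := by positivity
  have p2 : 0 ≤ m * m * t := by positivity
  have p3 : 0 ≤ m * m * t * t := by positivity
  have : (2 * b) ^ 2 + 2 * (2 * b) * (m * t + b * s) + (m ^ 2 * t + (b ^ 2 + 2 * m * b) * s) +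
      (m * t + b * s) ^ 2 ≤ 4 * (9/25 * (m*m)) + 4 * ((3/5 * m) * (7/5 * (m * t))) + m * m * t +
      (3/5 * m) * (2/5 * (m * t)) + 2 * (m * (2/5 * (m * t))) + (7/5 * (m * t)) ^ 2 := by
    linarith
  refine this.trans ?_
  linarith

end Tor

/-- Proposition 6.1 together with the coupling of Section 4: there is a bounded
size-biased coupling `(W, W')` for the number `W = n - S` of nonisolated points with
`Var(E[W' - W | W]) ≤ η_S(n,ρ)/n`. -/
theorem nonisolated_size_bias_coupling
    (d n : ℕ) (hd : 1 ≤ d) (hn : 4 ≤ n) (ρ : ℝ) (hρ : 0 < ρ)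
    (hphi : max ((3 : ℝ) ^ d) (2 ^ (d + 1) + 1) * phi d ρ < n) :
    ∃ (Ω : Type) (_ : MeasurableSpace Ω) (Q : Measure Ω) (_ : IsProbabilityMeasure Q)
      (X X' : Ω → ℝ),
      Measurable X ∧ Measurable X' ∧
      Measure.map X Q = Measure.map (fun ω => (n : ℝ) - isolCount d n ρ ω) (binppLaw d n) ∧
      (∀ g : ℝ → ℝ, Continuous g → (∃ C, ∀ x, |g x| ≤ C) →
        ∫ ω, X ω * g (X ω) ∂Q = (∫ ω, X ω ∂Q) * ∫ ω, g (X' ω) ∂Q) ∧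
      (∀ᵐ ω ∂Q, |X' ω - X ω| ≤ (kappa d : ℝ) + 1) ∧
      variance (Q[fun ω => X' ω - X ω|MeasurableSpace.comap X Real.measurableSpace]) Q ≤
        etaS d n ρ / n := by
  have hphi0 := Tor.phi_nonneg (d := d) hρ
  have h3 : 3 ^ d * phi d ρ < n :=
    (mul_le_mul_of_nonneg_right (le_max_left _ _) hphi0).trans_lt hphi
  have h2 : (2 ^ (d + 1) + 1) * phi d ρ < n :=
    (mul_le_mul_of_nonneg_right (le_max_right _ _) hphi0).trans_lt hphi
  obtain ⟨Ω, i1, Q, i2, X, X', a1, a2, a3, a4, a5, a6⟩ :=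
    (Tor.geo d n hd hn ρ hρ h3).main n (by omega)
  refine ⟨Ω, i1, Q, i2, X, X', a1, a2, ?_, a4, a5, a6.trans ?_⟩
  · rw [a3, ← Measure.map_congr (Tor.W_ae d n hd hn ρ hρ h3)]; rfl
  · exact div_le_div_of_nonneg_right (Tor.final_ineq d n hd hn ρ hρ h3 h2) (by positivity)

end
end

section
/- Provided 4ρ < n^{1/d}, one has Var(V) = n ∫_{B_{2ρ}(𝟎)} (1 − ρ^d ω_d(|y|/ρ)/n)^n dy + n(n − 2^d φ)(1 − 2φ/n)^n − n² (1 − φ/n)^{2n}, where the integral is over the toroidal ball B_{2ρ}(𝟎) ⊂ C_n and |y| denotes the toroidal distance from y to 𝟎. -/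
open MeasureTheory ProbabilityTheory Filter Set Metric
open scoped ENNReal NNReal BigOperators Topology Classical

noncomputable section

/-- Shifted box. -/
def sbox (d : ℕ) (L : ℝ) (a : Fin d → ℝ) : Set (Fin d → ℝ) :=
  Set.univ.pi fun i => Set.Ico (a i) (a i + L)

lemma sbox_zero (d : ℕ) (L : ℝ) : sbox d L 0 = box d L := by
  simp [sbox, box]

/-- Lattice hom. -/
def latHom (d : ℕ) (L : ℝ) : (Fin d → ℤ) →+ (Fin d → ℝ) where
  toFun k := fun i => k i * L
  map_zero' := by ext i; simp
  map_add' a b := by ext i; simp [add_mul]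

lemma latHom_apply (d : ℕ) (L : ℝ) (k : Fin d → ℤ) (i : Fin d) : latHom d L k i = k i * L := rfl

lemma measurableSet_sbox (d : ℕ) (L : ℝ) (a : Fin d → ℝ) : MeasurableSet (sbox d L a) :=
  MeasurableSet.univ_pi fun _ => measurableSet_Ico

instance (d : ℕ) (L : ℝ) : Countable (latHom d L).range :=
  (Set.countable_range (latHom d L)).to_subtype

lemma fund_sbox (d : ℕ) (L : ℝ) (hL : 0 < L) (a : Fin d → ℝ) :
    IsAddFundamentalDomain (latHom d L).range (sbox d L a) volume := by
  refine IsAddFundamentalDomain.mk' (measurableSet_sbox d L a).nullMeasurableSet fun x => ?_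
  choose m hm hu using fun i => existsUnique_add_zsmul_mem_Ico hL (x i) (a i)
  refine ⟨⟨latHom d L m, m, rfl⟩, ?_, ?_⟩
  · intro i _
    have := hm i
    simp only [zsmul_eq_mul] at this
    simpa [AddSubgroup.vadd_def, latHom_apply, add_comm] using this
  · rintro ⟨_, k, rfl⟩ hk
    have : k = m := by
      funext i
      apply hu i
      have := hk i trivial
      simpa [AddSubgroup.vadd_def, latHom_apply, add_comm] using this
    subst this; rfl

lemma per_setIntegral (d : ℕ) (L : ℝ) (hL : 0 < L) (a b : Fin d → ℝ) (f : (Fin d → ℝ) → ℝ)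
    (hf : ∀ k x, f (x + latHom d L k) = f x) :
    ∫ x in sbox d L a, f x = ∫ x in sbox d L b, f x := by
  refine (fund_sbox d L hL a).setIntegral_eq (fund_sbox d L hL b) ?_
  rintro ⟨_, k, rfl⟩ x
  rw [← hf k x, add_comm]; rfl

lemma per_measure (d : ℕ) (L : ℝ) (hL : 0 < L) (a b : Fin d → ℝ) (A : Set (Fin d → ℝ))
    (hA : MeasurableSet A) (hf : ∀ k x, (x + latHom d L k) ∈ A ↔ x ∈ A) :
    volume (A ∩ sbox d L a) = volume (A ∩ sbox d L b) := by
  refine (fund_sbox d L hL a).measure_set_eq (fund_sbox d L hL b) hA ?_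
  rintro ⟨_, k, rfl⟩
  ext x
  rw [← hf k x, add_comm]; rfl

lemma per_setIntegral_shift (d : ℕ) (L : ℝ) (hL : 0 < L) (a : Fin d → ℝ) (f : (Fin d → ℝ) → ℝ)
    (hf : ∀ k x, f (x + latHom d L k) = f x) :
    ∫ x in box d L, f (x + a) = ∫ x in box d L, f x := by
  have h := (measurePreserving_add_right (volume : Measure (Fin d → ℝ)) a).setIntegral_preimage_emb
    (measurableEmbedding_addRight a) f (sbox d L a)
  have e : (fun x => x + a) ⁻¹' sbox d L a = box d L := by
    ext x; simp [sbox, box, Set.mem_pi]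
    simp [add_comm (a _)]
  rw [e] at h
  rw [h, ← sbox_zero]
  exact per_setIntegral d L hL _ _ f hf

lemma per_measure_shift (d : ℕ) (L : ℝ) (hL : 0 < L) (a : Fin d → ℝ) (A : Set (Fin d → ℝ))
    (hA : MeasurableSet A) (hf : ∀ k x, (x + latHom d L k) ∈ A ↔ x ∈ A) :
    volume ((fun x => x + a) ⁻¹' A ∩ box d L) = volume (A ∩ box d L) := by
  have e : (fun x => x + a) ⁻¹' sbox d L a = box d L := by
    ext x; simp [sbox, box, Set.mem_pi]
    simp [add_comm (a _)]
  rw [← e, ← Set.preimage_inter, measure_preimage_add_right, e, ← sbox_zero]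
  exact per_measure d L hL _ _ A hA hf

/-- Euclidean norm -/
def eN {d : ℕ} (x : Fin d → ℝ) : ℝ := Real.sqrt (∑ i, x i ^ 2)

/-- torus norm -/
def tN {d : ℕ} (L : ℝ) (x : Fin d → ℝ) : ℝ := Real.sqrt (∑ i, (⨅ k : ℤ, |x i - k * L|) ^ 2)

lemma torDist_eq {d : ℕ} (L : ℝ) (x y : Fin d → ℝ) : torDist L x y = tN L (x - y) := rfl

lemma eN_eq {d : ℕ} (x : Fin d → ℝ) : eN x = ‖(WithLp.toLp 2 x : EuclideanSpace ℝ (Fin d))‖ := by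
  simp [eN, EuclideanSpace.norm_eq]

lemma eN_add_le {d : ℕ} (x y : Fin d → ℝ) : eN (x + y) ≤ eN x + eN y := by
  simp only [eN_eq, WithLp.toLp_add]; exact norm_add_le _ _

lemma eN_neg {d : ℕ} (x : Fin d → ℝ) : eN (-x) = eN x := by simp [eN]

lemma abs_le_eN {d : ℕ} (x : Fin d → ℝ) (i : Fin d) : |x i| ≤ eN x := by
  rw [eN, ← Real.sqrt_sq_eq_abs]
  apply Real.sqrt_le_sqrt
  exact Finset.single_le_sum (f := fun i => x i ^ 2) (fun _ _ => sq_nonneg _) (Finset.mem_univ i)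

/-- centred representative -/
def cen {d : ℕ} (L : ℝ) (x : Fin d → ℝ) : Fin d → ℤ := fun i => round (x i / L)

lemma bddB (x L : ℝ) : BddBelow (Set.range fun k : ℤ => |x - k * L|) :=
  ⟨0, by rintro _ ⟨k, rfl⟩; positivity⟩

lemma iInf_round (x L : ℝ) (hL : 0 < L) : (⨅ k : ℤ, |x - k * L|) = |x - round (x / L) * L| := by
  apply le_antisymm
  · exact ciInf_le (bddB x L) (round (x / L))
  · apply le_ciInf
    intro k
    have h := round_le (x / L) k
    have e : ∀ k : ℤ, |x - k * L| = |x / L - k| * L := by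
      intro k
      rw [← abs_of_pos hL, ← abs_mul, abs_of_pos hL]; congr 1; field_simp
    rw [e, e]; gcongr

lemma tN_eq {d : ℕ} (L : ℝ) (hL : 0 < L) (x : Fin d → ℝ) :
    tN L x = eN (x - latHom d L (cen L x)) := by
  simp [tN, eN, iInf_round _ _ hL, latHom_apply, cen]

lemma tN_le {d : ℕ} (L : ℝ) (x : Fin d → ℝ) (k : Fin d → ℤ) :
    tN L x ≤ eN (x - latHom d L k) := by
  unfold tN eN
  apply Real.sqrt_le_sqrt
  refine Finset.sum_le_sum fun i _ => ?_
  rw [← sq_abs ((x - latHom d L k) i)]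
  have h0 : 0 ≤ ⨅ k : ℤ, |x i - k * L| := Real.iInf_nonneg fun _ => abs_nonneg _
  have h1 := ciInf_le (bddB (x i) L) (k i)
  gcongr
  simpa [latHom_apply] using h1

lemma tN_le_iff {d : ℕ} (L : ℝ) (hL : 0 < L) (x : Fin d → ℝ) (r : ℝ) :
    tN L x ≤ r ↔ ∃ k, eN (x - latHom d L k) ≤ r :=
  ⟨fun h => ⟨_, (tN_eq L hL x).symm.le.trans h⟩, fun ⟨k, h⟩ => (tN_le L x k).trans h⟩

lemma tN_per {d : ℕ} (L : ℝ) (hL : 0 < L) (x : Fin d → ℝ) (k : Fin d → ℤ) :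
    tN L (x + latHom d L k) = tN L x := by
  have key : ∀ (x : Fin d → ℝ) k, tN L (x + latHom d L k) ≤ tN L x := by
    intro x k
    rw [tN_eq L hL x]
    refine (tN_le L _ (cen L x + k)).trans (le_of_eq ?_)
    rw [map_add]; congr 1; abel
  apply le_antisymm (key _ _)
  have := key (x + latHom d L k) (-k)
  simpa using this

lemma tN_neg {d : ℕ} (L : ℝ) (hL : 0 < L) (x : Fin d → ℝ) : tN L (-x) = tN L x := by
  have key : ∀ (x : Fin d → ℝ), tN L (-x) ≤ tN L x := by
    intro x
    rw [tN_eq L hL x, ← eN_neg]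
    refine (tN_le L _ (-cen L x)).trans (le_of_eq ?_)
    rw [map_neg]; congr 1; abel
  apply le_antisymm (key _)
  simpa using key (-x)

lemma tN_add_le {d : ℕ} (L : ℝ) (hL : 0 < L) (x y : Fin d → ℝ) :
    tN L (x + y) ≤ tN L x + tN L y := by
  rw [tN_eq L hL x, tN_eq L hL y]
  refine (tN_le L _ (cen L x + cen L y)).trans ?_
  refine le_trans (le_of_eq ?_) (eN_add_le _ _)
  rw [map_add]; congr 1; abel

lemma tN_meas {d : ℕ} (L : ℝ) : Measurable (tN L : (Fin d → ℝ) → ℝ) := by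
  unfold tN
  refine Measurable.sqrt (Finset.measurable_sum _ fun i _ => Measurable.pow_const ?_ _)
  refine Measurable.iInf fun k => ?_
  fun_prop

/-- In a box centered at `c` with `|c| + r < L/2`, the torus ball is the Euclidean ball. -/
lemma tN_iff_eN {d : ℕ} (L : ℝ) (hL : 0 < L) (c x : Fin d → ℝ) (r : ℝ)
    (hx : ∀ i, |x i - c i| ≤ L / 2) (hc : ∀ i, |c i| + r < L / 2) :
    tN L x ≤ r ↔ eN x ≤ r := by
  rw [tN_le_iff L hL]
  constructor
  · rintro ⟨k, hk⟩
    have : k = 0 := by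
      funext i
      have h1 := (abs_le_eN (x - latHom d L k) i).trans hk
      have h2 := hx i
      have h3 := hc i
      simp only [Pi.sub_apply, latHom_apply] at h1
      rw [abs_le] at h1 h2
      have h4 := le_abs_self (c i)
      have h5 := neg_abs_le (c i)
      have h6 : (k i : ℝ) * L < 1 * L := by linarith
      have h7 : (-1 : ℝ) * L < k i * L := by linarith
      have h8 := lt_of_mul_lt_mul_right h6 hL.le
      have h9 := lt_of_mul_lt_mul_right h7 hL.le
      have : k i < 1 := by exact_mod_cast h8
      have : -1 < k i := by exact_mod_cast h9
      simp; omega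
    subst this
    simpa using hk
  · intro h; exact ⟨0, by simpa using h⟩

lemma norm_unitVec (d : ℕ) (hd : 1 ≤ d) : ‖unitVec d‖ = 1 := by
  have : 0 < d := hd
  simp [unitVec, this]

lemma closedBall_vol (d : ℕ) (r : ℝ) (hr : 0 ≤ r) :
    volume (Metric.closedBall (0 : EuclideanSpace ℝ (Fin d)) r) =
      ENNReal.ofReal (unitBallVol d * r ^ d) := by
  rw [Measure.addHaar_closedBall' _ _ hr, mul_comm, ENNReal.ofReal_mul (by unfold unitBallVol; positivity)]
  simp only [finrank_euclideanSpace, Fintype.card_fin]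
  unfold unitBallVol
  rw [ENNReal.ofReal_toReal measure_closedBall_lt_top.ne]

open scoped Pointwise in
lemma unionVol (d : ℕ) (hd : 1 ≤ d) (ρ : ℝ) (hρ : 0 < ρ) (z : EuclideanSpace ℝ (Fin d)) :
    (volume (Metric.closedBall (0 : EuclideanSpace ℝ (Fin d)) ρ ∪ Metric.closedBall z ρ)).toReal =
      ρ ^ d * omegaVol d (‖z‖ / ρ) := by
  have e : Metric.closedBall (0 : EuclideanSpace ℝ (Fin d)) ρ ∪ Metric.closedBall z ρ =
      ρ • (Metric.closedBall (0 : EuclideanSpace ℝ (Fin d)) 1 ∪ Metric.closedBall (ρ⁻¹ • z) 1) := by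
    rw [Set.smul_set_union, _root_.smul_closedBall _ _ zero_le_one, _root_.smul_closedBall _ _ zero_le_one,
      smul_inv_smul₀ hρ.ne']
    simp [abs_of_pos hρ]
  rw [e, Measure.addHaar_smul]
  simp only [finrank_euclideanSpace, Fintype.card_fin, ENNReal.toReal_mul]
  rw [abs_of_pos (by positivity), ENNReal.toReal_ofReal (by positivity)]
  congr 1
  unfold omegaVol
  congr 1
  set v : EuclideanSpace ℝ (Fin d) := (‖z‖ / ρ) • unitVec d with hv
  set w : EuclideanSpace ℝ (Fin d) := ρ⁻¹ • z with hw
  have hn : ‖v‖ = ‖w‖ := by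
    rw [hv, hw, norm_smul, norm_smul, norm_unitVec d hd, norm_div, norm_norm, norm_inv]
    field_simp
  have hR := Submodule.reflection_sub hn
  set R := (ℝ ∙ (v - w))ᗮ.reflection
  have hp := R.measurePreserving.measure_preimage
    (s := Metric.closedBall (0 : EuclideanSpace ℝ (Fin d)) 1 ∪ Metric.closedBall w 1)
    (measurableSet_closedBall.union measurableSet_closedBall).nullMeasurableSet
  rw [← hp]
  congr 1
  ext x
  simp only [Set.mem_preimage, Set.mem_union, Metric.mem_closedBall, dist_zero_right,
    LinearIsometryEquiv.norm_map]
  rw [← hR, LinearIsometryEquiv.dist_map]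

lemma eN_ball_vol (d : ℕ) (r : ℝ) (hr : 0 ≤ r) :
    volume {x : Fin d → ℝ | eN x ≤ r} = ENNReal.ofReal (unitBallVol d * r ^ d) := by
  rw [← closedBall_vol d r hr, ← (PiLp.volume_preserving_toLp (Fin d)).measure_preimage
    measurableSet_closedBall.nullMeasurableSet]
  congr 1; ext x
  simp [eN_eq]

lemma eN_union_vol (d : ℕ) (hd : 1 ≤ d) (ρ : ℝ) (hρ : 0 < ρ) (z : Fin d → ℝ) :
    (volume {x : Fin d → ℝ | eN x ≤ ρ ∨ eN (z - x) ≤ ρ}).toReal =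
      ρ ^ d * omegaVol d (eN z / ρ) := by
  rw [eN_eq z, ← unionVol d hd ρ hρ, ← (PiLp.volume_preserving_toLp (Fin d)).measure_preimage
    (measurableSet_closedBall.union measurableSet_closedBall).nullMeasurableSet]
  congr 2; ext x
  simp [eN_eq, dist_eq_norm, norm_sub_rev]

/-- volume of union of two torus balls -/
def FF (d : ℕ) (L ρ : ℝ) (z : Fin d → ℝ) : ℝ :=
  (volume ({u | tN L u ≤ ρ ∨ tN L (z - u) ≤ ρ} ∩ box d L)).toReal

lemma measurableSet_FF (d : ℕ) (L ρ : ℝ) (z : Fin d → ℝ) :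
    MeasurableSet {u : Fin d → ℝ | tN L u ≤ ρ ∨ tN L (z - u) ≤ ρ} :=
  (measurableSet_le (tN_meas L) measurable_const).union
    (measurableSet_le ((tN_meas L).comp (measurable_const.sub measurable_id)) measurable_const)

lemma FF_set_per (d : ℕ) (L ρ : ℝ) (hL : 0 < L) (z : Fin d → ℝ) (k : Fin d → ℤ) (x : Fin d → ℝ) :
    (x + latHom d L k) ∈ {u : Fin d → ℝ | tN L u ≤ ρ ∨ tN L (z - u) ≤ ρ} ↔
      x ∈ {u : Fin d → ℝ | tN L u ≤ ρ ∨ tN L (z - u) ≤ ρ} := by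
  simp only [Set.mem_ofPred_eq, tN_per L hL]
  have : z - (x + latHom d L k) = (z - x) + latHom d L (-k) := by rw [map_neg]; abel
  rw [this, tN_per L hL]

lemma FF_per (d : ℕ) (L ρ : ℝ) (hL : 0 < L) (k : Fin d → ℤ) (z : Fin d → ℝ) :
    FF d L ρ (z + latHom d L k) = FF d L ρ z := by
  unfold FF
  have : ∀ u, z + latHom d L k - u = (z - u) + latHom d L k := fun u => by abel
  simp only [this, tN_per L hL]

lemma FF_near (d : ℕ) (hd : 1 ≤ d) (L ρ : ℝ) (hρ : 0 < ρ) (hL : 4 * ρ < L) (z : Fin d → ℝ)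
    (hz : tN L z ≤ 2 * ρ) : FF d L ρ z = ρ ^ d * omegaVol d (tN L z / ρ) := by
  have hL0 : 0 < L := by linarith
  have h1 := FF_per d L ρ hL0 (- cen L z) z
  rw [map_neg, ← sub_eq_add_neg] at h1
  rw [← h1]
  rw [tN_eq L hL0] at hz ⊢
  set w := z - latHom d L (cen L z)
  rw [← eN_union_vol d hd ρ hρ]
  unfold FF
  rw [← sbox_zero, per_measure d L hL0 0 (fun i => w i / 2 - L / 2) _ (measurableSet_FF d L ρ w)
    (fun k x => FF_set_per d L ρ hL0 w k x)]
  congr 2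
  have hw : ∀ i, |w i / 2| ≤ ρ := fun i => by
    have := (abs_le_eN w i).trans hz
    rw [abs_div, abs_two]; linarith
  have hc : ∀ i, |(fun i => w i / 2) i| + ρ < L / 2 := fun i => by
    have := hw i
    simp only; linarith
  ext u
  simp only [Set.mem_inter_iff, Set.mem_ofPred_eq, sbox, Set.mem_pi, Set.mem_univ, true_imp_iff,
    Set.mem_Ico]
  constructor
  · rintro ⟨h, hb⟩
    have hb1 : ∀ i, |u i - (fun i => w i / 2) i| ≤ L / 2 := fun i => by
      have := hb i
      rw [abs_le]; constructor <;> simp only <;> linarith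
    have hb2 : ∀ i, |(w - u) i - (fun i => w i / 2) i| ≤ L / 2 := fun i => by
      have := hb i
      rw [abs_le]; constructor <;> simp only [Pi.sub_apply] <;> linarith
    rwa [tN_iff_eN L hL0 _ _ _ hb1 hc, tN_iff_eN L hL0 _ _ _ hb2 hc] at h
  · intro h
    constructor
    · rcases h with h | h
      · left; exact (tN_le_iff L hL0 _ _).2 ⟨0, by simpa using h⟩
      · right; exact (tN_le_iff L hL0 _ _).2 ⟨0, by simpa using h⟩
    · intro i
      have h2 := abs_le.1 (hw i)
      rcases h with h | h
      · have h1 := abs_le.1 ((abs_le_eN _ i).trans h)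
        constructor <;> linarith
      · have h1 := abs_le.1 ((abs_le_eN _ i).trans h)
        simp only [Pi.sub_apply] at h1
        constructor <;> linarith

lemma tball_vol (d : ℕ) (L r : ℝ) (hr : 0 ≤ r) (hL : 2 * r < L) :
    volume ({u : Fin d → ℝ | tN L u ≤ r} ∩ box d L) = ENNReal.ofReal (unitBallVol d * r ^ d) := by
  have hL0 : 0 < L := by linarith
  rw [← sbox_zero, per_measure d L hL0 0 (fun i => - L / 2) _
    (measurableSet_le (tN_meas L) measurable_const)
    (fun k x => by simp only [Set.mem_ofPred_eq, tN_per L hL0]), ← eN_ball_vol d r hr]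
  congr 1
  have hc : ∀ i, |(0 : Fin d → ℝ) i| + r < L / 2 := fun i => by
    simp; linarith
  ext u
  simp only [Set.mem_inter_iff, Set.mem_ofPred_eq, sbox, Set.mem_pi, Set.mem_univ, true_imp_iff,
    Set.mem_Ico]
  constructor
  · rintro ⟨h, hb⟩
    rwa [tN_iff_eN L hL0 0 _ _ _ hc] at h
    intro i
    have := hb i
    rw [abs_le]; simp only [Pi.zero_apply]; constructor <;> linarith
  · intro h
    refine ⟨(tN_le_iff L hL0 _ _).2 ⟨0, by simpa using h⟩, fun i => ?_⟩
    have h1 := abs_le.1 ((abs_le_eN _ i).trans h)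
    constructor <;> linarith

lemma tball_shift (d : ℕ) (L : ℝ) (hL : 0 < L) (r : ℝ) (x : Fin d → ℝ) :
    volume ({u : Fin d → ℝ | tN L (u - x) ≤ r} ∩ box d L) =
      volume ({u : Fin d → ℝ | tN L u ≤ r} ∩ box d L) := by
  rw [← per_measure_shift d L hL (-x) {u : Fin d → ℝ | tN L u ≤ r}
    (measurableSet_le (tN_meas L) measurable_const)
    (fun k x => by simp only [Set.mem_ofPred_eq, tN_per L hL])]
  rfl

lemma FF_shift (d : ℕ) (L ρ : ℝ) (hL : 0 < L) (x y : Fin d → ℝ) :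
    (volume ({u : Fin d → ℝ | tN L (u - x) ≤ ρ ∨ tN L (u - y) ≤ ρ} ∩ box d L)).toReal =
      FF d L ρ (y - x) := by
  unfold FF
  rw [← per_measure_shift d L hL (-x) _ (measurableSet_FF d L ρ (y - x))
    (FF_set_per d L ρ hL (y - x))]
  congr 3
  ext u
  simp only [Set.mem_preimage, Set.mem_ofPred_eq]
  rw [← tN_neg L hL (u - y), ← sub_eq_add_neg]
  have : - (u - y) = y - x - (u - x) := by abel
  rw [this]

lemma FF_far (d : ℕ) (L ρ : ℝ) (hρ : 0 < ρ) (hL : 4 * ρ < L) (z : Fin d → ℝ)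
    (hz : 2 * ρ < tN L z) : FF d L ρ z = 2 * phi d ρ := by
  have hL0 : 0 < L := by linarith
  have hpos : 0 ≤ unitBallVol d := by unfold unitBallVol; positivity
  have hm : ∀ z : Fin d → ℝ, MeasurableSet {u : Fin d → ℝ | tN L (u - z) ≤ ρ} := fun z =>
    measurableSet_le ((tN_meas L).comp (measurable_id.sub measurable_const)) measurable_const
  have h1 := FF_shift d L ρ hL0 0 z
  rw [sub_zero] at h1
  rw [← h1, Set.ofPred_or, Set.union_inter_distrib_right, measure_union, tball_shift d L hL0,
    tball_shift d L hL0, tball_vol d L ρ hρ.le (by linarith), ENNReal.toReal_add (by simp) (by simp),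
    ENNReal.toReal_ofReal (by positivity), phi]
  · ring
  · rw [Set.disjoint_left]
    rintro u ⟨hu, -⟩ ⟨hv, -⟩
    simp only [Set.mem_ofPred_eq, sub_zero] at hu hv
    have := tN_add_le L hL0 u (-(u - z))
    rw [tN_neg L hL0] at this
    have e : u + -(u - z) = z := by abel
    rw [e] at this
    linarith
  · exact (hm z).inter (sbox_zero d L ▸ measurableSet_sbox d L 0)

lemma prodInt {E E' : Type*} [MeasurableSpace E] [MeasurableSpace E'] (n : ℕ)
    (ν : Measure E) [IsProbabilityMeasure ν] (μ : Measure E') [IsFiniteMeasure μ]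
    (g : E → E' → ℝ) (hg : Measurable (Function.uncurry g)) (h0 : ∀ u x, 0 ≤ g u x)
    (h1 : ∀ u x, g u x ≤ 1) :
    Integrable (Function.uncurry fun (ω : Fin n → E) x => ∏ i, g (ω i) x)
      ((Measure.pi fun _ : Fin n => ν).prod μ) ∧
    ∫ ω : Fin n → E, ∫ x, ∏ i, g (ω i) x ∂μ ∂(Measure.pi fun _ => ν) =
      ∫ x, (∫ u, g u x ∂ν) ^ n ∂μ := by
  have hI : Integrable (Function.uncurry fun (ω : Fin n → E) x => ∏ i, g (ω i) x)
      ((Measure.pi fun _ : Fin n => ν).prod μ) := by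
    refine Integrable.of_bound (C := 1) ?_ ?_
    · refine Measurable.aestronglyMeasurable ?_
      refine Finset.measurable_prod _ fun i _ => ?_
      have hm : Measurable (fun p : (Fin n → E) × E' => (p.1 i, p.2)) := by fun_prop
      exact hg.comp hm
    · refine ae_of_all _ fun p => ?_
      simp only [Function.uncurry]
      rw [Real.norm_of_nonneg (Finset.prod_nonneg fun i _ => h0 _ _)]
      exact Finset.prod_le_one (fun i _ => h0 _ _) (fun i _ => h1 _ _)
  refine ⟨hI, ?_⟩
  rw [integral_integral_swap hI]
  refine integral_congr_ae (ae_of_all _ fun x => ?_)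
  simp only
  rw [integral_fintype_prod_eq_pow (fun u => g u x), Fintype.card_fin]

lemma var_abstract {E : Type*} [MeasurableSpace E] (n : ℕ)
    (ν : Measure E) [IsProbabilityMeasure ν] (μ : Measure E) [IsFiniteMeasure μ]
    (g : E → E → ℝ) (hg : Measurable (Function.uncurry g)) (h0 : ∀ u x, 0 ≤ g u x)
    (h1 : ∀ u x, g u x ≤ 1) (c : ℝ) :
    variance (fun ω : Fin n → E => c - ∫ x, ∏ i, g (ω i) x ∂μ) (Measure.pi fun _ => ν) =
      (∫ p, (∫ u, g u p.1 * g u p.2 ∂ν) ^ n ∂(μ.prod μ)) - (∫ x, (∫ u, g u x ∂ν) ^ n ∂μ) ^ 2 := by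
  obtain ⟨hI, hE⟩ := prodInt n ν μ g hg h0 h1
  have hg2 : Measurable (Function.uncurry fun (u : E) (p : E × E) => g u p.1 * g u p.2) := by
    refine Measurable.mul ?_ ?_
    · exact hg.comp (measurable_fst.prodMk (measurable_fst.comp measurable_snd))
    · exact hg.comp (measurable_fst.prodMk (measurable_snd.comp measurable_snd))
  obtain ⟨hI2, hE2⟩ := prodInt n ν (μ.prod μ) (fun u p => g u p.1 * g u p.2) hg2
    (fun u p => mul_nonneg (h0 _ _) (h0 _ _))
    (fun u p => mul_le_one₀ (h1 _ _) (h0 _ _) (h1 _ _))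
  have hWi : Integrable (fun ω : Fin n → E => ∫ x, ∏ i, g (ω i) x ∂μ) (Measure.pi fun _ => ν) :=
    hI.integral_prod_left
  have hsq : ∀ ω : Fin n → E, (∫ x, ∏ i, g (ω i) x ∂μ) ^ 2 =
      ∫ p, ∏ i, (g (ω i) p.1 * g (ω i) p.2) ∂(μ.prod μ) := by
    intro ω
    rw [sq, ← integral_prod_mul]
    simp only [Finset.prod_mul_distrib]
  rw [variance_const_sub hWi.aestronglyMeasurable, variance_eq_sub, hE, ← hE2]
  · simp only [Pi.pow_apply, hsq]
  · rw [memLp_two_iff_integrable_sq hWi.aestronglyMeasurable]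
    simp only [hsq]
    exact hI2.integral_prod_left

lemma measurableSet_box (d : ℕ) (L : ℝ) : MeasurableSet (box d L) :=
  sbox_zero d L ▸ measurableSet_sbox d L 0

lemma volume_box (d : ℕ) (L : ℝ) : volume (box d L) = ENNReal.ofReal L ^ d := by
  simp [box, volume_pi_pi]

lemma uniformBox_real (d : ℕ) (L : ℝ) (hL : 0 < L) (A : Set (Fin d → ℝ)) (hA : MeasurableSet A) :
    (uniformBox d L).real A = (volume (A ∩ box d L)).toReal / L ^ d := by
  unfold uniformBox Measure.real
  rw [Measure.smul_apply, Measure.restrict_apply hA, ENNReal.smul_def, smul_eq_mul,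
    ENNReal.toReal_mul]
  simp only [ENNReal.coe_toReal, NNReal.coe_inv, NNReal.coe_pow, Real.coe_toNNReal _ hL.le]
  rw [inv_mul_eq_div]

lemma uniformBox_prob (d : ℕ) (L : ℝ) (hL : 0 < L) : IsProbabilityMeasure (uniformBox d L) := by
  constructor
  unfold uniformBox
  have hp : (L.toNNReal ^ d) ≠ 0 := by
    have : L.toNNReal ≠ 0 := by simpa using hL
    positivity
  rw [Measure.smul_apply, Measure.restrict_apply_univ, volume_box, ENNReal.smul_def, smul_eq_mul,
    ENNReal.ofReal, ENNReal.coe_inv hp, ENNReal.coe_pow]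
  refine ENNReal.inv_mul_cancel ?_ ?_
  · exact_mod_cast hp
  · exact ENNReal.pow_ne_top ENNReal.coe_ne_top

/-- indicator of not being covered -/
def gg (d : ℕ) (L ρ : ℝ) (u x : Fin d → ℝ) : ℝ := if tN L (u - x) ≤ ρ then 0 else 1

lemma gg_meas (d : ℕ) (L ρ : ℝ) : Measurable (Function.uncurry (gg d L ρ)) := by
  refine Measurable.ite ?_ measurable_const measurable_const
  exact measurableSet_le ((tN_meas L).comp (measurable_fst.sub measurable_snd)) measurable_const

lemma meas1 (d : ℕ) (L ρ : ℝ) (x : Fin d → ℝ) : MeasurableSet {u : Fin d → ℝ | tN L (u - x) ≤ ρ} :=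
  measurableSet_le ((tN_meas L).comp (measurable_id.sub measurable_const)) measurable_const

lemma meas2 (d : ℕ) (L ρ : ℝ) (x : Fin d → ℝ) : MeasurableSet {u : Fin d → ℝ | tN L (x - u) ≤ ρ} :=
  measurableSet_le ((tN_meas L).comp (measurable_const.sub measurable_id)) measurable_const

lemma int_g1 (d : ℕ) (L ρ : ℝ) (hρ : 0 < ρ) (hL : 4 * ρ < L) (x : Fin d → ℝ) :
    ∫ u, gg d L ρ u x ∂(uniformBox d L) = 1 - phi d ρ / L ^ d := by
  have hL0 : 0 < L := by linarith
  have := uniformBox_prob d L hL0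
  have e : (fun u => gg d L ρ u x) = Set.indicator {u | tN L (u - x) ≤ ρ}ᶜ 1 := by
    ext u; by_cases h : tN L (u - x) ≤ ρ <;> simp [gg, h]
  have hpos : 0 ≤ unitBallVol d := by unfold unitBallVol; positivity
  rw [e, integral_indicator_one (meas1 d L ρ x).compl, measureReal_compl (meas1 d L ρ x),
    uniformBox_real d L hL0 _ (meas1 d L ρ x), tball_shift d L hL0,
    tball_vol d L ρ hρ.le (by linarith), ENNReal.toReal_ofReal (by positivity)]
  simp [phi]

lemma int_g2 (d : ℕ) (L ρ : ℝ) (hρ : 0 < ρ) (hL : 4 * ρ < L) (x y : Fin d → ℝ) :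
    ∫ u, gg d L ρ u x * gg d L ρ u y ∂(uniformBox d L) = 1 - FF d L ρ (y - x) / L ^ d := by
  have hL0 : 0 < L := by linarith
  have := uniformBox_prob d L hL0
  have e : (fun u => gg d L ρ u x * gg d L ρ u y) =
      Set.indicator {u | tN L (u - x) ≤ ρ ∨ tN L (u - y) ≤ ρ}ᶜ 1 := by
    ext u; by_cases h : tN L (u - x) ≤ ρ <;> by_cases h' : tN L (u - y) ≤ ρ <;> simp [gg, h, h']
  have hm : MeasurableSet {u : Fin d → ℝ | tN L (u - x) ≤ ρ ∨ tN L (u - y) ≤ ρ} :=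
    (meas1 d L ρ x).union (meas1 d L ρ y)
  rw [e, integral_indicator_one hm.compl, measureReal_compl hm,
    uniformBox_real d L hL0 _ hm, FF_shift d L ρ hL0]
  simp

lemma covered_eq (d n : ℕ) (L ρ : ℝ) (hL : 0 < L) (ω : Fin n → Fin d → ℝ) :
    (volume (⋃ i, torBall L (ω i) ρ)).toReal =
      L ^ d - ∫ x in box d L, ∏ i, gg d L ρ (ω i) x := by
  have hfin : IsFiniteMeasure (volume.restrict (box d L)) :=
    ⟨by rw [Measure.restrict_apply_univ, volume_box]; exact ENNReal.pow_lt_top ENNReal.ofReal_lt_top⟩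
  set S : Set (Fin d → ℝ) := ⋃ i, {x | tN L (ω i - x) ≤ ρ} with hS
  have hm : MeasurableSet S := MeasurableSet.iUnion fun i => meas2 d L ρ (ω i)
  have e : (fun x => ∏ i, gg d L ρ (ω i) x) = Set.indicator Sᶜ 1 := by
    ext x
    by_cases h : x ∈ S
    · rw [Set.indicator_of_notMem (by simpa using h)]
      obtain ⟨i, hi⟩ := Set.mem_iUnion.1 h
      exact Finset.prod_eq_zero (Finset.mem_univ i) (if_pos hi)
    · rw [Set.indicator_of_mem (by simpa using h)]
      refine Finset.prod_eq_one fun i _ => if_neg fun hi => h ?_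
      exact Set.mem_iUnion.2 ⟨i, hi⟩
  have e2 : (⋃ i, torBall L (ω i) ρ) = S ∩ box d L := by
    ext x
    simp [hS, torBall, torDist_eq, and_comm]
  rw [e, integral_indicator_one hm.compl, measureReal_compl hm, e2]
  unfold Measure.real
  rw [Measure.restrict_apply hm, Measure.restrict_apply_univ, volume_box]
  simp [hL.le]

lemma FF_meas (d : ℕ) (L ρ : ℝ) : Measurable (FF d L ρ) := by
  have hm : MeasurableSet {p : (Fin d → ℝ) × (Fin d → ℝ) | tN L p.2 ≤ ρ ∨ tN L (p.1 - p.2) ≤ ρ} :=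
    (measurableSet_le ((tN_meas L).comp measurable_snd) measurable_const).union
    (measurableSet_le ((tN_meas L).comp (measurable_fst.sub measurable_snd)) measurable_const)
  have h := (measurable_measure_prodMk_left (ν := volume.restrict (box d L)) hm).ennreal_toReal
  convert h using 2 with z
  unfold FF
  rw [Measure.restrict_apply (hm.preimage measurable_prodMk_left)]
  rfl

lemma FF_bound (d : ℕ) (L ρ : ℝ) (hL : 0 < L) (z : Fin d → ℝ) :
    0 ≤ FF d L ρ z ∧ FF d L ρ z ≤ L ^ d := by
  constructor
  · unfold FF; positivity
  · unfold FF
    have : L ^ d = (volume (box d L)).toReal := by rw [volume_box]; simp [hL.le]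
    rw [this]
    refine ENNReal.toReal_mono ?_ (measure_mono Set.inter_subset_right)
    rw [volume_box]; exact ENNReal.pow_ne_top ENNReal.ofReal_ne_top

lemma main_aux (d n : ℕ) (hd : 1 ≤ d) (L ρ : ℝ) (hρ : 0 < ρ) (hL : 4 * ρ < L) (hn : L ^ d = n) :
    variance (fun ω : Fin n → Fin d → ℝ => (volume (⋃ i, torBall L (ω i) ρ)).toReal)
        (Measure.pi fun _ => uniformBox d L) =
      n * (∫ y in torBall L (0 : Fin d → ℝ) (2 * ρ),
            (1 - ρ ^ d * omegaVol d (torDist L (0 : Fin d → ℝ) y / ρ) / n) ^ n ∂volume) +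
        n * ((n : ℝ) - 2 ^ d * phi d ρ) * (1 - 2 * phi d ρ / n) ^ n -
        (n : ℝ) ^ 2 * (1 - phi d ρ / n) ^ (2 * n) := by
  have hL0 : 0 < L := by linarith
  have := uniformBox_prob d L hL0
  have hfin : IsFiniteMeasure (volume.restrict (box d L)) :=
    ⟨by rw [Measure.restrict_apply_univ, volume_box]; exact ENNReal.pow_lt_top ENNReal.ofReal_lt_top⟩
  have hvol : (volume.restrict (box d L)).real Set.univ = n := by
    unfold Measure.real
    rw [Measure.restrict_apply_univ, volume_box, ← hn]; simp [hL0.le]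
  simp only [covered_eq d n L ρ hL0]
  rw [var_abstract n _ _ (gg d L ρ) (gg_meas d L ρ)
    (fun u x => by unfold gg; split_ifs <;> norm_num)
    (fun u x => by unfold gg; split_ifs <;> norm_num)]
  simp only [int_g1 d L ρ hρ hL, int_g2 d L ρ hρ hL, integral_const, hvol, hn, smul_eq_mul]
  obtain ⟨f, hf⟩ : ∃ f : (Fin d → ℝ) → ℝ, f = fun z => (1 - FF d L ρ z / n) ^ n := ⟨_, rfl⟩
  have hfm : Measurable f := hf ▸ (measurable_const.sub ((FF_meas d L ρ).div_const _)).pow_const _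
  have hfb : ∀ z, ‖f z‖ ≤ 1 := by
    intro z
    obtain ⟨h0, h1⟩ := FF_bound d L ρ hL0 z
    rw [hn] at h1
    have h2 : FF d L ρ z / n ≤ 1 := div_le_one_of_le₀ h1 (by positivity)
    have h3 : 0 ≤ FF d L ρ z / n := by positivity
    rw [hf, Real.norm_of_nonneg (pow_nonneg (by linarith) _)]
    exact pow_le_one₀ (by linarith) (by linarith)
  have hfp : ∀ k x, f (x + latHom d L k) = f x := fun k x => by
    simp only [hf, FF_per d L ρ hL0]
  have hfi : ∀ μ : Measure (Fin d → ℝ), IsFiniteMeasure μ → Integrable f μ := fun μ _ =>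
    Integrable.of_bound hfm.aestronglyMeasurable 1 (ae_of_all _ hfb)
  have step1 : ∫ p, (1 - FF d L ρ (p.2 - p.1) / n) ^ n
      ∂((volume.restrict (box d L)).prod (volume.restrict (box d L))) =
      n * ∫ z in box d L, f z := by
    have hh : (fun p : (Fin d → ℝ) × (Fin d → ℝ) => (1 - FF d L ρ (p.2 - p.1) / n) ^ n) =
        fun p => f (p.2 - p.1) := by
      funext p; rw [hf]
    rw [hh, integral_prod]
    · simp only [sub_eq_add_neg, per_setIntegral_shift d L hL0 _ f hfp, integral_const, hvol,
        smul_eq_mul]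
    · exact Integrable.of_bound
        (hfm.comp (measurable_snd.sub measurable_fst)).aestronglyMeasurable 1
        (ae_of_all _ fun _ => hfb _)
  rw [step1]
  have htb : torBall L (0 : Fin d → ℝ) (2 * ρ) = {u : Fin d → ℝ | tN L u ≤ 2 * ρ} ∩ box d L := by
    ext x
    simp [torBall, torDist_eq, tN_neg L hL0, and_comm]
  have hmT : MeasurableSet {u : Fin d → ℝ | tN L u ≤ 2 * ρ} :=
    measurableSet_le (tN_meas L) measurable_const
  have hmb := measurableSet_box d L
  have step2 : ∫ z in box d L, f z =
      (∫ y in torBall L (0 : Fin d → ℝ) (2 * ρ),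
            (1 - ρ ^ d * omegaVol d (torDist L (0 : Fin d → ℝ) y / ρ) / n) ^ n ∂volume) +
      ((n : ℝ) - 2 ^ d * phi d ρ) * (1 - 2 * phi d ρ / n) ^ n := by
    rw [← integral_inter_add_sdiff hmT (hfi _ hfin), Set.inter_comm, ← htb]
    congr 1
    · rw [htb]
      refine setIntegral_congr_fun (hmT.inter hmb) fun z hz => ?_
      have hz1 : tN L z ≤ 2 * ρ := hz.1
      simp only [hf, torDist_eq, zero_sub, tN_neg L hL0]
      rw [FF_near d hd L ρ hρ hL z hz1]
    · have : ∫ z in box d L \ {u : Fin d → ℝ | tN L u ≤ 2 * ρ}, f z =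
          ∫ z in box d L \ {u : Fin d → ℝ | tN L u ≤ 2 * ρ}, (1 - 2 * phi d ρ / n) ^ n := by
        refine setIntegral_congr_fun (hmb.diff hmT) fun z hz => ?_
        have hz1 : 2 * ρ < tN L z := not_le.1 hz.2
        simp only [hf]
        rw [FF_far d L ρ hρ hL z hz1]
      rw [this, setIntegral_const, smul_eq_mul]
      congr 1
      have hb' : volume (box d L) ≠ ⊤ := by
        rw [volume_box]; exact ENNReal.pow_ne_top ENNReal.ofReal_ne_top
      have h := measureReal_inter_add_sdiff (μ := volume) (s := box d L) hmT hb'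
      have h1 : volume.real (box d L) = n := by
        unfold Measure.real; rw [volume_box, ← hn]; simp [hL0.le]
      have hpos : 0 ≤ unitBallVol d := by unfold unitBallVol; positivity
      have h2 : volume.real (box d L ∩ {u : Fin d → ℝ | tN L u ≤ 2 * ρ}) = 2 ^ d * phi d ρ := by
        unfold Measure.real
        rw [Set.inter_comm, tball_vol d L (2 * ρ) (by positivity) (by linarith),
          ENNReal.toReal_ofReal (by positivity), phi, mul_pow]
        ring
      linarith
  rw [step2]
  ring

/-- Formula (7.2) of Goldstein–Penrose: exact variance of the covered volume. -/
theorem variance_coveredVol_formula (d n : ℕ) (hd : 1 ≤ d) (hn : 4 ≤ n) (ρ : ℝ)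
    (hρ : 0 < ρ) (h4ρ : 4 * ρ < sideLen d n) :
    variance (coveredVol d n ρ) (binppLaw d n) =
      n * (∫ y in torBall (sideLen d n) (0 : Fin d → ℝ) (2 * ρ),
            (1 - ρ ^ d * omegaVol d (torDist (sideLen d n) (0 : Fin d → ℝ) y / ρ) / n) ^ n ∂volume) +
        n * ((n : ℝ) - 2 ^ d * phi d ρ) * (1 - 2 * phi d ρ / n) ^ n -
        (n : ℝ) ^ 2 * (1 - phi d ρ / n) ^ (2 * n) := by
  refine main_aux d n hd (sideLen d n) ρ hρ h4ρ ?_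
  unfold sideLen
  rw [← Real.rpow_natCast, ← Real.rpow_mul (by positivity), inv_mul_cancel₀ (by positivity),
    Real.rpow_one]

end
end
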